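/- arXiv:2112.09430 — 3 statements merged into one kernel-verified Lean document; each statement's English description precedes it below -/
import Mathlib

section
/- Let p, q ≥ 1 be integers with p + q ≥ 4 and set n = p + q. The action of O(p,q) on the flag manifold F_{1,n-2} = {(V₁, V₂) : V₁ ⊆ V₂ ⊆ ℝⁿ, dim V₁ = 1, dim V₂ = n−2} has exactly 21 orbits when p ≥ 3 and q ≥ 3. (By the correspondence established in the paper, this is the number of left-invariant pseudo-Riemannian metrics of signature (p,q) on H₃ × ℝ^{n−3} up to scaling and automorphisms.) -/
open Module

noncomputable section

/-- The radical of a subspace `W` with respect to a bilinear form `B`: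
the set of vectors of `W` orthogonal to every vector of `W`. -/
def rad {V : Type*} [AddCommGroup V] [Module ℝ V] (B : LinearMap.BilinForm ℝ V)
    (W : Submodule ℝ V) : Submodule ℝ V :=
  W ⊓ LinearMap.BilinForm.orthogonal B W

/-- The maximal dimension of a subspace of `W` on which `B` is positive definite. -/
def posIdx {V : Type*} [AddCommGroup V] [Module ℝ V] (B : LinearMap.BilinForm ℝ V)
    (W : Submodule ℝ V) : ℕ :=
  sSup {k | ∃ P : Submodule ℝ V, P ≤ W ∧ finrank ℝ P = k ∧ ∀ x ∈ P, x ≠ 0 → 0 < B x x}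

/-- The maximal dimension of a subspace of `W` on which `B` is negative definite. -/
def negIdx {V : Type*} [AddCommGroup V] [Module ℝ V] (B : LinearMap.BilinForm ℝ V)
    (W : Submodule ℝ V) : ℕ :=
  sSup {k | ∃ P : Submodule ℝ V, P ≤ W ∧ finrank ℝ P = k ∧ ∀ x ∈ P, x ≠ 0 → B x x < 0}

/-- The signature `(s, t, u)` of a subspace `W` with respect to a bilinear form `B`. -/
def signat {V : Type*} [AddCommGroup V] [Module ℝ V] (B : LinearMap.BilinForm ℝ V)
    (W : Submodule ℝ V) : ℕ × ℕ × ℕ :=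
  (posIdx B W, negIdx B W, finrank ℝ (rad B W))

/-- The standard inner product of signature `(p, q)` on `ℝ^(p+q)`,
given by the diagonal matrix `I_{p,q}`. -/
def stdForm (p q : ℕ) : LinearMap.BilinForm ℝ (Fin (p + q) → ℝ) :=
  Matrix.toLinearMap₂' ℝ (Matrix.diagonal fun i => if (i : ℕ) < p then (1 : ℝ) else -1)

/-- The flag manifold `F_{1, p+q-2}`: pairs `(V₁, V₂)` of subspaces of `ℝ^(p+q)` with
`V₁ ⊆ V₂`, `dim V₁ = 1` and `dim V₂ = p+q-2`. -/
def FlagPQ (p q : ℕ) : Type :=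
  {VW : Submodule ℝ (Fin (p + q) → ℝ) × Submodule ℝ (Fin (p + q) → ℝ) //
    VW.1 ≤ VW.2 ∧ finrank ℝ VW.1 = 1 ∧ finrank ℝ VW.2 = p + q - 2}

/-- Two flags lie in the same `O(p,q)`-orbit: there is a linear automorphism of `ℝ^(p+q)`
preserving the standard form of signature `(p,q)` carrying one flag to the other. -/
def orbitRel (p q : ℕ) (F G : FlagPQ p q) : Prop :=
  ∃ g : (Fin (p + q) → ℝ) ≃ₗ[ℝ] (Fin (p + q) → ℝ),
    (∀ x y, stdForm p q (g x) (g y) = stdForm p q x y) ∧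
      F.1.1 = (G.1.1).map g.toLinearMap ∧ F.1.2 = (G.1.2).map g.toLinearMap


section Witt

variable {V : Type*} [AddCommGroup V] [Module ℝ V] {B : LinearMap.BilinForm ℝ V}

/-- The reflection in a non-isotropic vector. -/
theorem exists_reflection (hs : ∀ x y, B x y = B y x) (d : V) (hd : B d d ≠ 0) :
    ∃ g : V ≃ₗ[ℝ] V, (∀ x y, B (g x) (g y) = B x y) ∧
      ∀ x, g x = x - (2 * B d x / B d d) • d := by
  have h : ((2 / B d d) • B d) d = 2 := by
    simp only [LinearMap.smul_apply, smul_eq_mul]; field_simp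
  refine ⟨Module.reflection h, ?_, ?_⟩
  · intro x y
    simp only [Module.reflection_apply, LinearMap.smul_apply, smul_eq_mul, map_sub, map_smul,
      LinearMap.sub_apply, hs x d]
    field_simp
    ring
  · intro x
    rw [Module.reflection_apply]
    simp only [LinearMap.smul_apply, smul_eq_mul]
    congr 2
    ring

/-- A reflection carrying `v` to `w` when `v - w` is not isotropic. -/
theorem exists_iso_of_sub (hs : ∀ x y, B x y = B y x) (v w : V) (hvw : B v v = B w w)
    (hd : B (v - w) (v - w) ≠ 0) :
    ∃ g : V ≃ₗ[ℝ] V, (∀ x y, B (g x) (g y) = B x y) ∧ g v = w ∧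
      ∀ x, B (v - w) x = 0 → g x = x := by
  obtain ⟨g, hg, hgx⟩ := exists_reflection hs (v - w) hd
  refine ⟨g, hg, ?_, ?_⟩
  · rw [hgx]
    have : 2 * B (v - w) v / B (v - w) (v - w) = 1 := by
      rw [div_eq_one_iff_eq hd]
      simp only [map_sub, LinearMap.sub_apply, hs w v]
      linarith
    rw [this]; simp
  · intro x hx
    rw [hgx, hx]; simp

theorem exists_generic (Sp : Submodule ℝ V) (v w : V) (hs : ∀ x y, B x y = B y x)
    (tv tw t : V) (htv : tv ∈ Sp) (htw : tw ∈ Sp) (ht : t ∈ Sp)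
    (hv : B v tv ≠ 0) (hw : B w tw ≠ 0) (hq : B t t ≠ 0) :
    ∃ x ∈ Sp, B x x ≠ 0 ∧ B v x ≠ 0 ∧ B w x ≠ 0 := by
  open Polynomial in
  have key : ∀ P : ℝ[X], P ≠ 0 → ∃ s : ℝ, P.eval s ≠ 0 := by
    intro P hP
    by_contra! hh
    exact hP (Polynomial.funext (by simpa using hh))
  obtain ⟨t0, ht0, h1, h2⟩ : ∃ x ∈ Sp, B v x ≠ 0 ∧ B w x ≠ 0 := by
    obtain ⟨s, hs'⟩ := key ((Polynomial.C (B v tv) + Polynomial.C (B v tw) * Polynomial.X) *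
      (Polynomial.C (B w tw) * Polynomial.X + Polynomial.C (B w tv))) (by
        apply mul_ne_zero
        · intro h
          have := congrArg (fun P => Polynomial.coeff P 0) h
          simp at this; exact hv this
        · intro h
          have := congrArg (fun P => Polynomial.coeff P 1) h
          simp [Polynomial.coeff_C] at this; exact hw this)
    refine ⟨tv + s • tw, Sp.add_mem htv (Sp.smul_mem _ htw), ?_, ?_⟩
    · intro h; apply hs'; simp at h ⊢; left; linarith
    · intro h; apply hs'; simp at h ⊢; right; linarith
  obtain ⟨s, hs'⟩ := key ((Polynomial.C (B v t0) + Polynomial.C (B v t) * Polynomial.X) *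
      (Polynomial.C (B w t0) + Polynomial.C (B w t) * Polynomial.X) *
      (Polynomial.C (B t t) * Polynomial.X ^ 2 + Polynomial.C (2 * B t0 t) * Polynomial.X
        + Polynomial.C (B t0 t0))) (by
        refine mul_ne_zero (mul_ne_zero ?_ ?_) ?_
        · intro h
          have := congrArg (fun P => Polynomial.coeff P 0) h
          simp at this; exact h1 this
        · intro h
          have := congrArg (fun P => Polynomial.coeff P 0) h
          simp at this; exact h2 this
        · intro h
          have := congrArg (fun P => Polynomial.coeff P 2) h
          simp [-map_mul] at this; exact hq this)
  refine ⟨t0 + s • t, Sp.add_mem ht0 (Sp.smul_mem _ ht), ?_, ?_, ?_⟩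
  · intro h; apply hs'; simp [hs t t0] at h ⊢; right; linarith
  · intro h; apply hs'; simp at h ⊢; left; left; linarith
  · intro h; apply hs'; simp at h ⊢; left; right; linarith

variable [FiniteDimensional ℝ V]

theorem witt_step (hs : ∀ x y, B x y = B y x) (hB : B.Nondegenerate) (S : Submodule ℝ V)
    (hS : 2 * finrank ℝ S < finrank ℝ V) (v w : V) (hv : v ∉ S) (hw : w ∉ S)
    (hvw : B v v = B w w) (hS' : ∀ s ∈ S, B s v = B s w) :
    ∃ g : V ≃ₗ[ℝ] V, (∀ x y, B (g x) (g y) = B x y) ∧ g v = w ∧ ∀ s ∈ S, g s = s := by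
  have hrefl : B.IsRefl := fun x y h => by rw [hs]; exact h
  have hoo := LinearMap.BilinForm.orthogonal_orthogonal hB hrefl S
  have hdim := LinearMap.BilinForm.finrank_orthogonal hB S
  have ex : ∀ v, v ∉ S → ∃ t ∈ B.orthogonal S, B v t ≠ 0 := by
    intro v hv
    by_contra! hh
    apply hv
    rw [← hoo, LinearMap.BilinForm.mem_orthogonal_iff]
    intro n hn
    rw [hs]; exact hh n hn
  obtain ⟨tv, htv, htv'⟩ := ex v hv
  obtain ⟨tw, htw, htw'⟩ := ex w hw
  obtain ⟨t, ht, ht'⟩ : ∃ t ∈ B.orthogonal S, B t t ≠ 0 := by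
    by_contra! hh
    have : B.orthogonal S ≤ S := by
      conv_rhs => rw [← hoo]
      intro x hx
      rw [LinearMap.BilinForm.mem_orthogonal_iff]
      intro n hn
      have h1 := hh _ (Submodule.add_mem _ hn hx)
      have h2 := hh _ hn
      have h3 := hh _ hx
      simp only [map_add, LinearMap.add_apply, hs x n] at h1
      linarith
    have := Submodule.finrank_mono this
    omega
  obtain ⟨x, hx, hq, hvx, hwx⟩ := exists_generic (B.orthogonal S) v w hs tv tw t htv htw ht
    htv' htw' ht'
  rw [LinearMap.BilinForm.mem_orthogonal_iff] at hx
  set c : ℝ := - 2 * B v x / B x x with hc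
  have hcx : c * B x x = - 2 * B v x := by rw [hc]; field_simp
  have hc0 : c ≠ 0 := by
    rw [hc]; exact div_ne_zero (mul_ne_zero (by norm_num) hvx) hq
  by_cases hd : B (v - w) (v - w) = 0
  · obtain ⟨g1, hg1, hg1v, hg1f⟩ := exists_iso_of_sub hs v (v + c • x) (by
      simp only [map_add, LinearMap.add_apply, map_smul, LinearMap.smul_apply, smul_eq_mul, hs x v]
      linear_combination (-c) * hcx) (by
      simpa using ⟨hc0, hq⟩)
    obtain ⟨g2, hg2, hg2v, hg2f⟩ := exists_iso_of_sub hs (v + c • x) w (by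
      rw [← hvw]
      simp only [map_add, LinearMap.add_apply, map_smul, LinearMap.smul_apply, smul_eq_mul, hs x v]
      linear_combination (c) * hcx) (by
      have : B (v + c • x - w) (v + c • x - w) = - 2 * c * B w x := by
        simp only [map_add, map_sub, LinearMap.add_apply, LinearMap.sub_apply, map_smul,
          LinearMap.smul_apply, smul_eq_mul, hs x v, hs x w, hs w v] at hd ⊢
        linear_combination (c) * hcx + hd
      rw [this]
      exact mul_ne_zero (mul_ne_zero (by norm_num) hc0) hwx)
    refine ⟨g1.trans g2, fun a b => by simp [hg1, hg2], by simp [hg1v, hg2v], ?_⟩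
    intro s hsS
    have hxs := hx s hsS
    rw [hs] at hxs
    have e1 := hS' s hsS
    rw [hs s v, hs s w] at e1
    rw [LinearEquiv.trans_apply, hg1f, hg2f]
    · simp [hxs, e1]
    · simp [hxs]
  · obtain ⟨g, hg, hgv, hgf⟩ := exists_iso_of_sub hs v w hvw hd
    refine ⟨g, hg, hgv, fun s hsS => hgf s ?_⟩
    have e1 := hS' s hsS
    rw [hs s v, hs s w] at e1
    simp [e1]

theorem witt (hs : ∀ x y, B x y = B y x) (hB : B.Nondegenerate) (k : ℕ)
    (hk : 2 * k < finrank ℝ V + 2) (v w : Fin k → V) (hv : LinearIndependent ℝ v)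
    (hw : LinearIndependent ℝ w) (hvw : ∀ i j, B (v i) (v j) = B (w i) (w j)) :
    ∃ g : V ≃ₗ[ℝ] V, (∀ x y, B (g x) (g y) = B x y) ∧ ∀ i, g (v i) = w i := by
  induction k with
  | zero => exact ⟨LinearEquiv.refl ℝ V, fun _ _ => rfl, fun i => i.elim0⟩
  | succ k ih =>
    rw [linearIndependent_finSucc'] at hv hw
    obtain ⟨g, hg, hgv⟩ := ih (by omega) (Fin.init v) (Fin.init w) hv.1 hw.1
      (fun i j => hvw _ _)
    have hspan : (Submodule.span ℝ (Set.range (Fin.init v))).map g.toLinearMap =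
        Submodule.span ℝ (Set.range (Fin.init w)) := by
      rw [Submodule.map_span, ← Set.range_comp]
      congr 2
      funext i
      exact hgv i
    obtain ⟨g2, hg2, hg2v, hg2f⟩ := witt_step hs hB (Submodule.span ℝ (Set.range (Fin.init w)))
      (by rw [finrank_span_eq_card hw.1]; simp; omega) (g (v (Fin.last k))) (w (Fin.last k))
      (by
        intro h
        rw [← hspan] at h
        obtain ⟨y, hy, hyg⟩ := h
        have : y = v (Fin.last k) := g.injective hyg
        exact hv.2 (this ▸ hy)) hw.2 (by rw [hg, hvw]) (by
        intro s hsS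
        induction hsS using Submodule.span_induction with
        | mem x hx =>
          obtain ⟨i, rfl⟩ := hx
          rw [← hgv i, hg, hgv i]
          exact hvw _ _
        | zero => simp
        | add x y _ _ hx hy => simp [hx, hy]
        | smul a x _ hx => simp [hx])
    refine ⟨g.trans g2, fun a b => by simp [hg, hg2], ?_⟩
    intro i
    refine Fin.lastCases ?_ (fun i => ?_) i
    · simpa using hg2v
    · rw [LinearEquiv.trans_apply]
      have := hgv i
      simp only [Fin.init] at this
      rw [this]
      exact hg2f _ (Submodule.subset_span ⟨i, rfl⟩)

end Witt

section Planes

variable {V : Type*} [AddCommGroup V] [Module ℝ V] {B : LinearMap.BilinForm ℝ V}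

theorem finrank_pair {u v : V} (h : LinearIndependent ℝ ![u, v]) :
    finrank ℝ (Submodule.span ℝ {u, v}) = 2 := by
  have e : Set.range ![u, v] = {u, v} := by simp [Matrix.range_cons, Set.pair_comm]
  have := finrank_span_eq_card h
  rw [e] at this
  simpa using this

theorem exists_scale (x : V) : ∃ (c : ℝ) (a : SignType), c ≠ 0 ∧ B (c • x) (c • x) = (a : ℝ) := by
  by_cases h : B x x = 0
  · exact ⟨1, 0, one_ne_zero, by simp [h]⟩
  · have h' : |B x x| ≠ 0 := by simpa using h
    have hsq : Real.sqrt |B x x| * Real.sqrt |B x x| = |B x x| := Real.mul_self_sqrt (abs_nonneg _)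
    have hs0 : Real.sqrt |B x x| ≠ 0 := by
      intro h0; rw [h0] at hsq; simp at hsq; exact h (abs_eq_zero.1 hsq.symm)
    refine ⟨(Real.sqrt |B x x|)⁻¹, SignType.sign (B x x), inv_ne_zero hs0, ?_⟩
    simp only [map_smul, LinearMap.smul_apply, smul_eq_mul]
    rw [← mul_assoc, ← mul_inv, hsq]
    have := sign_mul_abs (B x x)
    field_simp
    linarith

theorem sign_coe_mul (a : SignType) (r : ℝ) (hr : 0 < r) : SignType.sign ((a : ℝ) * r) = a := by
  cases a <;> simp [hr]

theorem signCast_mono {a b : SignType} (h : a ≤ b) : (a : ℝ) ≤ (b : ℝ) := by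
  revert h
  cases a <;> cases b <;> simp

/-- The signs of the values of the form on the nonzero vectors of a subspace. -/
def signSet (B : LinearMap.BilinForm ℝ V) (U : Submodule ℝ V) : Set SignType :=
  {s | ∃ x ∈ U, x ≠ 0 ∧ SignType.sign (B x x) = s}

theorem signSet_mem_pair (a b : SignType) (u v : V)
    (h : LinearIndependent ℝ ![u, v]) (huu : B u u = (a : ℝ)) (hvv : B v v = (b : ℝ)) :
    a ∈ signSet B (Submodule.span ℝ {u, v}) ∧ b ∈ signSet B (Submodule.span ℝ {u, v}) := by
  refine ⟨⟨u, Submodule.subset_span (by simp), h.ne_zero 0, ?_⟩,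
    ⟨v, Submodule.subset_span (by simp), h.ne_zero 1, ?_⟩⟩
  · rw [huu]; simpa using sign_coe_mul a 1 one_pos
  · rw [hvv]; simpa using sign_coe_mul b 1 one_pos

theorem signSet_bounds (a b : SignType) (u v : V)
    (huu : B u u = (a : ℝ)) (hvv : B v v = (b : ℝ)) (huv : B u v = 0) (hvu : B v u = 0)
    (s : SignType) (hs : s ∈ signSet B (Submodule.span ℝ {u, v})) :
    s ≤ max a b ∧ min a b ≤ s := by
  obtain ⟨x, hx, hx0, rfl⟩ := hs
  obtain ⟨α, β, rfl⟩ := Submodule.mem_span_pair.1 hx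
  have hQ : B (α • u + β • v) (α • u + β • v) = (a : ℝ) * α ^ 2 + (b : ℝ) * β ^ 2 := by
    simp [huu, hvv, huv, hvu]; ring
  have hpos : 0 < α ^ 2 + β ^ 2 := by
    by_contra hh
    have h1 : α = 0 := by nlinarith [sq_nonneg α, sq_nonneg β]
    have h2 : β = 0 := by nlinarith [sq_nonneg α, sq_nonneg β]
    apply hx0; simp [h1, h2]
  rw [hQ]
  constructor
  · conv_rhs => rw [← sign_coe_mul (max a b) _ hpos]
    apply SignType.sign.monotone
    rw [mul_add]
    have := signCast_mono (le_max_left a b)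
    have := signCast_mono (le_max_right a b)
    gcongr
  · conv_lhs => rw [← sign_coe_mul (min a b) _ hpos]
    apply SignType.sign.monotone
    rw [mul_add]
    have := signCast_mono (min_le_left a b)
    have := signCast_mono (min_le_right a b)
    gcongr

theorem sign_pair_unique (a b a' b' : SignType) (u v u' v' : V)
    (h : LinearIndependent ℝ ![u, v]) (huu : B u u = (a : ℝ)) (hvv : B v v = (b : ℝ))
    (huv : B u v = 0) (hvu : B v u = 0)
    (h' : LinearIndependent ℝ ![u', v']) (huu' : B u' u' = (a' : ℝ)) (hvv' : B v' v' = (b' : ℝ))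
    (huv' : B u' v' = 0) (hvu' : B v' u' = 0)
    (he : Submodule.span ℝ {u, v} = Submodule.span ℝ {u', v'}) :
    max a b = max a' b' ∧ min a b = min a' b' := by
  obtain ⟨h1, h2⟩ := signSet_mem_pair a b u v h huu hvv
  obtain ⟨h1', h2'⟩ := signSet_mem_pair a' b' u' v' h' huu' hvv'
  have k := signSet_bounds a b u v huu hvv huv hvu
  have k' := signSet_bounds a' b' u' v' huu' hvv' huv' hvu'
  rw [he] at h1 h2 k
  exact ⟨le_antisymm (max_le (k' _ h1).1 (k' _ h2).1) (max_le (k _ h1').1 (k _ h2').1),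
    le_antisymm (le_min (k _ h1').2 (k _ h2').2) (le_min (k' _ h1).2 (k' _ h2).2)⟩

theorem sign_line_unique (c c' : SignType) (l l' : V) (h' : l' ≠ 0)
    (hc : B l l = (c : ℝ)) (hc' : B l' l' = (c' : ℝ))
    (he : Submodule.span ℝ {l} = Submodule.span ℝ {l'}) : c = c' := by
  have : l' ∈ Submodule.span ℝ {l} := he ▸ Submodule.mem_span_singleton_self l'
  obtain ⟨r, rfl⟩ := Submodule.mem_span_singleton.1 this
  have hr : r ≠ 0 := by rintro rfl; simp at h'
  have e : B (r • l) (r • l) = (c : ℝ) * r ^ 2 := by simp [hc]; ring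
  have k1 := sign_coe_mul c (r ^ 2) (by positivity)
  have k2 := sign_coe_mul c' 1 one_pos
  rw [mul_one] at k2
  rw [← k1, ← e, hc', k2]

/-- Orthogonal normalized bases of planes. -/
theorem exists_plane_basis (hs : ∀ x y, B x y = B y x) (U : Submodule ℝ V)
    (hU : finrank ℝ U = 2) :
    ∃ (a b : SignType) (u v : V), b ≤ a ∧ LinearIndependent ℝ ![u, v] ∧
      Submodule.span ℝ {u, v} = U ∧ B u u = (a : ℝ) ∧ B v v = (b : ℝ) ∧ B u v = 0 := by
  have : FiniteDimensional ℝ U := FiniteDimensional.of_finrank_pos (by omega)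
  have hsym : LinearMap.IsSymm (B.restrict U) := ⟨fun x y => hs x y⟩
  obtain ⟨e, he⟩ := LinearMap.BilinForm.exists_orthogonal_basis hsym
  revert e
  rw [hU]
  intro e he
  have h01 : B (e 0 : V) (e 1 : V) = 0 := he (by decide : (0 : Fin 2) ≠ 1)
  obtain ⟨c, a, hc, ha⟩ := exists_scale (B := B) (e 0 : V)
  obtain ⟨d, b, hd, hb⟩ := exists_scale (B := B) (e 1 : V)
  have hli : LinearIndependent ℝ ![(e 0 : V), (e 1 : V)] := by
    have := e.linearIndependent.map' U.subtype (by simp)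
    have e2 : ![(e 0 : V), (e 1 : V)] = U.subtype ∘ e := by
      ext i; fin_cases i <;> simp
    rw [e2]; exact this
  have hli' : LinearIndependent ℝ ![c • (e 0 : V), d • (e 1 : V)] := by
    rw [LinearIndependent.pair_iff] at hli ⊢
    intro s t hst
    rw [smul_smul, smul_smul] at hst
    have := hli _ _ hst
    simpa [hc, hd] using this
  have hspan : Submodule.span ℝ {c • (e 0 : V), d • (e 1 : V)} = U := by
    apply Submodule.eq_of_le_of_finrank_eq
    · rw [Submodule.span_le]
      rintro x (rfl | rfl)
      · exact U.smul_mem _ (e 0).2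
      · exact U.smul_mem _ (e 1).2
    · rw [hU]
      exact finrank_pair hli'
  have horth : B (c • (e 0 : V)) (d • (e 1 : V)) = 0 := by simp [h01]
  rcases le_total b a with hab | hab
  · exact ⟨a, b, _, _, hab, hli', hspan, ha, hb, horth⟩
  · refine ⟨b, a, _, _, hab, ?_, ?_, hb, ha, by rw [hs]; exact horth⟩
    · exact LinearIndependent.pair_symm_iff.1 hli'
    · rw [Set.pair_comm]; exact hspan

end Planes

section Std

theorem stdForm_single (p q : ℕ) (i j : Fin (p + q)) (x y : ℝ) :
    stdForm p q (Pi.single i x) (Pi.single j y) =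
      if i = j then (if (i : ℕ) < p then (1 : ℝ) else -1) * x * y else 0 := by
  rw [stdForm, Matrix.toLinearMap₂'_apply']
  split_ifs with h h'
  · subst h; simp [h', mul_comm]
  · subst h; simp [h', mul_comm]
  · simp [h, Matrix.mulVec_single]

theorem stdForm_symm (p q : ℕ) (x y : Fin (p + q) → ℝ) :
    stdForm p q x y = stdForm p q y x := by
  simp only [stdForm, Matrix.toLinearMap₂'_apply', Matrix.mulVec_diagonal, dotProduct]
  apply Finset.sum_congr rfl
  intros; ring

theorem stdForm_nondeg (p q : ℕ) : (stdForm p q).Nondegenerate := by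
  rw [stdForm]
  apply Matrix.Nondegenerate.toLinearMap₂'
  apply Matrix.nondegenerate_of_det_ne_zero
  rw [Matrix.det_diagonal]
  apply Finset.prod_ne_zero_iff.2
  intro i _
  split_ifs <;> norm_num

/-- Coefficient on the positive basis vector. -/
def posCoef (a : SignType) : ℝ := if a = -1 then 0 else 1

/-- Coefficient on the negative basis vector. -/
def negCoef (a : SignType) : ℝ := if a = 1 then 0 else 1

/-- A model vector of sign `a` in the `i`-th hyperbolic plane. -/
def modelVec (p q : ℕ) (hp : 3 ≤ p) (hq : 3 ≤ q) (i : Fin 3) (a : SignType) :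
    Fin (p + q) → ℝ :=
  Pi.single ⟨i, by omega⟩ (posCoef a) + Pi.single ⟨p + i, by omega⟩ (negCoef a)

theorem modelVec_form (p q : ℕ) (hp : 3 ≤ p) (hq : 3 ≤ q) (i j : Fin 3) (a b : SignType)
    (h : i = j → a = b) :
    stdForm p q (modelVec p q hp hq i a) (modelVec p q hp hq j b) =
      if i = j then (a : ℝ) else 0 := by
  have e1 : ((i : ℕ) = p + (j : ℕ)) = False := by simp; omega
  have e2 : (p + (i : ℕ) = (j : ℕ)) = False := by simp; omega
  have e3 : (i : ℕ) < p := by omega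
  simp only [modelVec, map_add, LinearMap.add_apply, stdForm_single, Fin.mk.injEq, e1, e2, e3,
    add_right_inj, Fin.val_inj]
  by_cases hij : i = j
  · have := h hij
    subst this
    cases a <;> simp [hij, posCoef, negCoef]
  · simp [hij]

theorem modelVec_li (p q : ℕ) (hp : 3 ≤ p) (hq : 3 ≤ q) (s : Fin 3 → SignType) :
    LinearIndependent ℝ (fun i => modelVec p q hp hq i (s i)) := by
  rw [Fintype.linearIndependent_iff]
  intro g hg i
  have h1 := congrFun hg ⟨i, by omega⟩
  have h2 := congrFun hg ⟨p + i, by omega⟩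
  have e1 : ∀ j : Fin 3, ((i : ℕ) = p + (j : ℕ)) = False := fun j => by simp; omega
  have e2 : ∀ j : Fin 3, (p + (i : ℕ) = (j : ℕ)) = False := fun j => by simp; omega
  simp only [modelVec, Finset.sum_apply, Pi.smul_apply, Pi.add_apply, Pi.single_apply,
    Fin.mk.injEq, e1, e2, add_right_inj, Fin.val_inj, smul_eq_mul, if_false, add_zero, zero_add,
    mul_ite, mul_zero, Finset.sum_ite_eq, Finset.mem_univ, if_true, Pi.zero_apply] at h1 h2
  cases hsi : s i <;> simp [hsi, posCoef, negCoef] at h1 h2 <;> assumption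

end Std

section Types

/-- A linearly independent family with diagonal Gram matrix. -/
def HasGram {V : Type*} [AddCommGroup V] [Module ℝ V] (B : LinearMap.BilinForm ℝ V) {k : ℕ}
    (s : Fin k → SignType) (v : Fin k → V) : Prop :=
  LinearIndependent ℝ v ∧ ∀ i j, B (v i) (v j) = if i = j then (s i : ℝ) else 0

/-- Labels of the orbits. -/
abbrev Label : Type := ({ab : SignType × SignType // ab.2 ≤ ab.1} × SignType) ⊕ SignType

theorem card_label : Nat.card Label = 21 := by
  rw [Nat.card_eq_fintype_card]; decide

/-- The flag `F` is of the type described by a label. -/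
def FType (p q : ℕ) (F : FlagPQ p q) : Label → Prop
  | Sum.inl (ab, c) => ∃ v : Fin 3 → (Fin (p + q) → ℝ),
      HasGram (stdForm p q) ![ab.1.1, ab.1.2, c] v ∧ F.1.1 = Submodule.span ℝ {v 2} ∧
        F.1.2 = (stdForm p q).orthogonal (Submodule.span ℝ {v 0, v 1})
  | Sum.inr a => ∃ v : Fin 2 → (Fin (p + q) → ℝ),
      HasGram (stdForm p q) ![a, 0] v ∧ F.1.1 = Submodule.span ℝ {v 1} ∧
        F.1.2 = (stdForm p q).orthogonal (Submodule.span ℝ {v 0, v 1})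

theorem map_orthogonal {V : Type*} [AddCommGroup V] [Module ℝ V] (B : LinearMap.BilinForm ℝ V)
    (g : V ≃ₗ[ℝ] V) (hg : ∀ x y, B (g x) (g y) = B x y) (S : Submodule ℝ V) :
    (B.orthogonal S).map g.toLinearMap = B.orthogonal (S.map g.toLinearMap) := by
  ext x
  simp only [Submodule.mem_map, LinearMap.BilinForm.mem_orthogonal_iff]
  constructor
  · rintro ⟨y, hy, rfl⟩ n ⟨m, hm, rfl⟩
    simp [hg, hy m hm]
  · intro h
    refine ⟨g.symm x, fun n hn => ?_, by simp⟩
    have := h (g n) ⟨n, hn, rfl⟩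
    rw [← hg]; simpa using this

theorem HasGram.map {V : Type*} [AddCommGroup V] [Module ℝ V] {B : LinearMap.BilinForm ℝ V}
    {k : ℕ} {s : Fin k → SignType} {v : Fin k → V} (h : HasGram B s v)
    (g : V ≃ₗ[ℝ] V) (hg : ∀ x y, B (g x) (g y) = B x y) : HasGram B s (fun i => g (v i)) := by
  refine ⟨?_, fun i j => by rw [hg, h.2]⟩
  exact h.1.map' g.toLinearMap (by simp)

theorem FType.transport {p q : ℕ} {F G : FlagPQ p q} (h : orbitRel p q F G) (i : Label)
    (hi : FType p q G i) : FType p q F i := by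
  obtain ⟨g, hg, h1, h2⟩ := h
  match i, hi with
  | Sum.inl (ab, c), ⟨v, hv, e1, e2⟩ =>
    refine ⟨fun i => g (v i), hv.map g hg, ?_, ?_⟩
    · rw [h1, e1, Submodule.map_span]; simp
    · rw [h2, e2, map_orthogonal _ g hg, Submodule.map_span]; simp [Set.image_pair]
  | Sum.inr a, ⟨v, hv, e1, e2⟩ =>
    refine ⟨fun i => g (v i), hv.map g hg, ?_, ?_⟩
    · rw [h1, e1, Submodule.map_span]; simp
    · rw [h2, e2, map_orthogonal _ g hg, Submodule.map_span]; simp [Set.image_pair]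

theorem FType.orbitRel {p q : ℕ} (hp : 3 ≤ p) (hq : 3 ≤ q) {F G : FlagPQ p q} (i : Label)
    (hF : FType p q F i) (hG : FType p q G i) : orbitRel p q F G := by
  match i, hF, hG with
  | Sum.inl (ab, c), ⟨w, hw, f1, f2⟩, ⟨v, hv, e1, e2⟩ =>
    obtain ⟨g, hg, hgv⟩ := witt (stdForm_symm p q) (stdForm_nondeg p q) 3 (by simp; omega) v w
      hv.1 hw.1 (fun i j => by rw [hv.2, hw.2])
    refine ⟨g, hg, ?_, ?_⟩
    · rw [f1, e1, Submodule.map_span]; simp [hgv]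
    · rw [f2, e2, map_orthogonal _ g hg, Submodule.map_span]; simp [Set.image_pair, hgv]
  | Sum.inr a, ⟨w, hw, f1, f2⟩, ⟨v, hv, e1, e2⟩ =>
    obtain ⟨g, hg, hgv⟩ := witt (stdForm_symm p q) (stdForm_nondeg p q) 2 (by simp; omega) v w
      hv.1 hw.1 (fun i j => by rw [hv.2, hw.2])
    refine ⟨g, hg, ?_, ?_⟩
    · rw [f1, e1, Submodule.map_span]; simp [hgv]
    · rw [f2, e2, map_orthogonal _ g hg, Submodule.map_span]; simp [Set.image_pair, hgv]

theorem li_pair_of_three {V : Type*} [AddCommGroup V] [Module ℝ V] {v : Fin 3 → V}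
    (h : LinearIndependent ℝ v) : LinearIndependent ℝ ![v 0, v 1] := by
  have := h.comp ![0, 1] (by decide)
  convert this using 1
  ext i; fin_cases i <;> simp

theorem li_pair_of_two {V : Type*} [AddCommGroup V] [Module ℝ V] {v : Fin 2 → V}
    (h : LinearIndependent ℝ v) : LinearIndependent ℝ ![v 0, v 1] := by
  convert h using 1
  ext i; fin_cases i <;> simp

theorem notMem_of_three {V : Type*} [AddCommGroup V] [Module ℝ V] {v : Fin 3 → V}
    (h : LinearIndependent ℝ v) : v 2 ∉ Submodule.span ℝ {v 0, v 1} := by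
  have := h.notMem_span_image (s := {0, 1}) (x := 2) (by simp)
  rwa [Set.image_pair] at this

theorem stdForm_orthogonal_inj (p q : ℕ) {S T : Submodule ℝ (Fin (p + q) → ℝ)}
    (h : (stdForm p q).orthogonal S = (stdForm p q).orthogonal T) : S = T := by
  have hr : (stdForm p q).IsRefl := fun x y h => by rw [stdForm_symm]; exact h
  rw [← LinearMap.BilinForm.orthogonal_orthogonal (stdForm_nondeg p q) hr S, h,
    LinearMap.BilinForm.orthogonal_orthogonal (stdForm_nondeg p q) hr T]

theorem mixed_false {p q : ℕ} {F : FlagPQ p q}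
    {x : {ab : SignType × SignType // ab.2 ≤ ab.1} × SignType} {a : SignType}
    (h1 : FType p q F (Sum.inl x)) (h2 : FType p q F (Sum.inr a)) : False := by
  obtain ⟨v, hv, e1, e2⟩ := h1
  obtain ⟨w, hw, f1, f2⟩ := h2
  apply notMem_of_three hv.1
  rw [stdForm_orthogonal_inj p q (e2.symm.trans f2)]
  have : v 2 ∈ Submodule.span ℝ {w 1} := by
    rw [← f1, e1]; exact Submodule.mem_span_singleton_self _
  exact Submodule.span_mono (by simp) this

theorem FType.unique {p q : ℕ} {F : FlagPQ p q} (i j : Label) (hi : FType p q F i)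
    (hj : FType p q F j) : i = j := by
  match i, j, hi, hj with
  | Sum.inl x, Sum.inr a, hi, hj => exact (mixed_false hi hj).elim
  | Sum.inr a, Sum.inl x, hi, hj => exact (mixed_false hj hi).elim
  | Sum.inl (⟨(a, b), hab⟩, c), Sum.inl (⟨(a', b'), hab'⟩, c'), ⟨v, hv, e1, e2⟩,
      ⟨w, hw, f1, f2⟩ =>
    have hc : c = c' := sign_line_unique (B := stdForm p q) c c' (v 2) (w 2) (hw.1.ne_zero 2)
      (by simp [hv.2]) (by simp [hw.2]) (e1.symm.trans f1)
    have := sign_pair_unique (B := stdForm p q) a b a' b' (v 0) (v 1) (w 0) (w 1)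
      (li_pair_of_three hv.1) (by simp [hv.2]) (by simp [hv.2]) (by simp [hv.2]) (by simp [hv.2])
      (li_pair_of_three hw.1) (by simp [hw.2]) (by simp [hw.2]) (by simp [hw.2]) (by simp [hw.2])
      (stdForm_orthogonal_inj p q (e2.symm.trans f2))
    simp only at hab hab'
    rw [max_eq_left hab, max_eq_left hab', min_eq_right hab, min_eq_right hab'] at this
    obtain ⟨rfl, rfl⟩ := this
    subst hc
    rfl
  | Sum.inr a, Sum.inr a', ⟨v, hv, e1, e2⟩, ⟨w, hw, f1, f2⟩ =>
    have := sign_pair_unique (B := stdForm p q) a 0 a' 0 (v 0) (v 1) (w 0) (w 1)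
      (li_pair_of_two hv.1) (by simp [hv.2]) (by simp [hv.2]) (by simp [hv.2]) (by simp [hv.2])
      (li_pair_of_two hw.1) (by simp [hw.2]) (by simp [hw.2]) (by simp [hw.2]) (by simp [hw.2])
      (stdForm_orthogonal_inj p q (e2.symm.trans f2))
    congr 1
    clear * - this
    revert this
    revert a a'
    decide

/-- The flag built from a null-or-not line orthogonal to a plane. -/
theorem exists_flag {p q : ℕ} (u v l : Fin (p + q) → ℝ) (h : LinearIndependent ℝ ![u, v])
    (hl : l ≠ 0) (hu : stdForm p q u l = 0) (hv : stdForm p q v l = 0) :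
    ∃ F : FlagPQ p q, F.1.1 = Submodule.span ℝ {l} ∧
      F.1.2 = (stdForm p q).orthogonal (Submodule.span ℝ {u, v}) := by
  refine ⟨⟨(Submodule.span ℝ {l}, (stdForm p q).orthogonal (Submodule.span ℝ {u, v})),
    ?_, ?_, ?_⟩, rfl, rfl⟩
  · simp only [Submodule.span_singleton_le_iff_mem, LinearMap.BilinForm.mem_orthogonal_iff]
    intro n hn
    obtain ⟨α, β, rfl⟩ := Submodule.mem_span_pair.1 hn
    simp [hu, hv]
  · exact finrank_span_singleton hl
  · simp only
    rw [LinearMap.BilinForm.finrank_orthogonal (stdForm_nondeg p q)]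
    rw [finrank_pair h]; simp

theorem FType.exists_flag {p q : ℕ} (hp : 3 ≤ p) (hq : 3 ≤ q) (i : Label) :
    ∃ F, FType p q F i := by
  match i with
  | Sum.inl (ab, c) =>
    set s : Fin 3 → SignType := ![ab.1.1, ab.1.2, c] with hs
    have hg : HasGram (stdForm p q) s (fun i => modelVec p q hp hq i (s i)) :=
      ⟨modelVec_li p q hp hq s, fun i j => modelVec_form p q hp hq i j _ _ (by rintro rfl; rfl)⟩
    obtain ⟨F, h1, h2⟩ := _root_.exists_flag _ _ _ (li_pair_of_three hg.1) (hg.1.ne_zero 2)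
      (by simp [hg.2 0 2]) (by simp [hg.2 1 2])
    exact ⟨F, _, hg, h1, h2⟩
  | Sum.inr a =>
    set s : Fin 3 → SignType := ![a, 0, 0] with hs
    have hg : HasGram (stdForm p q) s (fun i => modelVec p q hp hq i (s i)) :=
      ⟨modelVec_li p q hp hq s, fun i j => modelVec_form p q hp hq i j _ _ (by rintro rfl; rfl)⟩
    have hg2 : HasGram (stdForm p q) ![a, 0]
        (fun i : Fin 2 => modelVec p q hp hq i.castSucc (s i.castSucc)) := by
      refine ⟨hg.1.comp Fin.castSucc (Fin.castSucc_injective 2), fun i j => ?_⟩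
      rw [hg.2]
      fin_cases i <;> fin_cases j <;> simp [hs]
    obtain ⟨F, h1, h2⟩ := _root_.exists_flag _ _ _ (li_pair_of_two hg2.1) (hg2.1.ne_zero 1)
      (by rw [hg2.2 0 1]; simp) (by rw [hg2.2 1 1]; simp)
    exact ⟨F, _, hg2, h1, h2⟩

theorem FType.exists_label {p q : ℕ} (hp : 3 ≤ p) (hq : 3 ≤ q) (F : FlagPQ p q) :
    ∃ i, FType p q F i := by
  obtain ⟨⟨L, W⟩, hLW, hL, hW⟩ := F
  simp only at hLW hL hW
  have hr : (stdForm p q).IsRefl := fun x y h => by rw [stdForm_symm]; exact h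
  set U := (stdForm p q).orthogonal W with hU
  have hUW : W = (stdForm p q).orthogonal U :=
    (LinearMap.BilinForm.orthogonal_orthogonal (stdForm_nondeg p q) hr W).symm
  have hUd : finrank ℝ U = 2 := by
    rw [hU, LinearMap.BilinForm.finrank_orthogonal (stdForm_nondeg p q), hW]
    simp; omega
  obtain ⟨l, c, hl0, hlL, hlc⟩ : ∃ (l : Fin (p + q) → ℝ) (c : SignType), l ≠ 0 ∧
      L = Submodule.span ℝ {l} ∧ stdForm p q l l = (c : ℝ) := by
    obtain ⟨l, hl, hl0, hl'⟩ := finrank_eq_one_iff'.1 hL |>.elim fun v hv =>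
      (⟨v.1, v.2, fun h => hv.1 (Subtype.ext h), fun w hw => by
        obtain ⟨r, hr⟩ := hv.2 ⟨w, hw⟩
        exact ⟨r, congrArg Subtype.val hr⟩⟩ :
          ∃ v : Fin (p + q) → ℝ, v ∈ L ∧ v ≠ 0 ∧ ∀ w ∈ L, ∃ r : ℝ, r • v = w)
    obtain ⟨r, c, hr0, hrc⟩ := exists_scale (B := stdForm p q) l
    refine ⟨r • l, c, smul_ne_zero hr0 hl0, ?_, hrc⟩
    rw [Submodule.span_singleton_smul_eq (IsUnit.mk0 r hr0)]
    apply le_antisymm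
    · intro w hw
      exact Submodule.mem_span_singleton.2 (hl' w hw)
    · simpa using hl
  have hlW : l ∈ W := hLW (hlL ▸ Submodule.mem_span_singleton_self l)
  have hlU : ∀ u ∈ U, stdForm p q u l = 0 := by
    rw [hUW] at hlW; exact hlW
  have hlU' : ∀ u ∈ U, stdForm p q l u = 0 := fun u hu => by rw [stdForm_symm]; exact hlU u hu
  by_cases hmem : l ∈ U
  · have hll : stdForm p q l l = 0 := hlU l hmem
    obtain ⟨u, huU, hul⟩ : ∃ u ∈ U, u ∉ Submodule.span ℝ {l} := by
      by_contra! hh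
      have := Submodule.finrank_mono (show U ≤ Submodule.span ℝ {l} from hh)
      rw [hUd, finrank_span_singleton hl0] at this
      omega
    obtain ⟨r, a, hr0, hra⟩ := exists_scale (B := stdForm p q) u
    have hruU := U.smul_mem r huU
    have hx1 := hlU _ hruU
    have hx2 := hlU' _ hruU
    have hli : LinearIndependent ℝ ![r • u, l] := by
      apply LinearIndependent.pair_symm_iff.1
      rw [LinearIndependent.pair_iff' hl0]
      intro t ht
      apply hul
      rw [Submodule.mem_span_singleton]
      exact ⟨r⁻¹ * t, by rw [mul_smul, ht, smul_smul, inv_mul_cancel₀ hr0, one_smul]⟩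
    have hspan : Submodule.span ℝ {r • u, l} = U := by
      apply Submodule.eq_of_le_of_finrank_eq
      · rw [Submodule.span_le]
        rintro x (rfl | rfl)
        · exact hruU
        · exact hmem
      · rw [hUd]
        exact finrank_pair hli
    refine ⟨Sum.inr a, ![r • u, l], ⟨hli, ?_⟩, by simpa using hlL, ?_⟩
    · intro i j
      generalize r • u = y at hra hx1 hx2
      fin_cases i <;> fin_cases j <;> simp [hra, hll, hx1, hx2]
    · simp only [Matrix.cons_val_zero, Matrix.cons_val_one]
      rw [hspan]; exact hUW
  · obtain ⟨a, b, u, v, hab, hli, hspan, huu, hvv, huv⟩ :=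
      exists_plane_basis (stdForm_symm p q) U hUd
    have hu : u ∈ U := hspan ▸ Submodule.subset_span (by simp)
    have hv : v ∈ U := hspan ▸ Submodule.subset_span (by simp)
    have hvu : stdForm p q v u = 0 := by rw [stdForm_symm]; exact huv
    refine ⟨Sum.inl (⟨(a, b), hab⟩, c), ![u, v, l], ⟨?_, ?_⟩, by simpa using hlL, ?_⟩
    · rw [linearIndependent_finSucc']
      have e : Fin.init ![u, v, l] = ![u, v] := by
        ext i; fin_cases i <;> rfl
      rw [e]
      refine ⟨hli, ?_⟩
      have : Set.range ![u, v] = {u, v} := by simp [Matrix.range_cons, Set.pair_comm]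
      rw [this, hspan]
      exact hmem
    · intro i j
      fin_cases i <;> fin_cases j <;>
        simp [huu, hvv, huv, hvu, hlc, hlU _ hu, hlU _ hv, hlU' _ hu, hlU' _ hv]
    · simp only [Matrix.cons_val_zero, Matrix.cons_val_one]
      rw [hspan]; exact hUW

end Types

/-- If `p, q ≥ 3`, the action of `O(p,q)` on the flag manifold `F_{1, p+q-2}`
has exactly 21 orbits. -/
theorem orbit_count_of_three_le (p q : ℕ) (hp : 3 ≤ p) (hq : 3 ≤ q) :
    Nat.card (Quot (orbitRel p q)) = 21 := by

  choose f hf using fun F : FlagPQ p q => FType.exists_label hp hq F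
  have hresp : ∀ F G, orbitRel p q F G → f F = f G := fun F G h =>
    FType.unique _ _ (hf F) (FType.transport h _ (hf G))
  rw [← card_label]
  apply Nat.card_eq_of_bijective (Quot.lift f hresp)
  constructor
  · rintro ⟨F⟩ ⟨G⟩ h
    have h' : f F = f G := h
    exact Quot.sound (FType.orbitRel hp hq (f F) (hf F) (h' ▸ hf G))
  · intro i
    obtain ⟨F, hF⟩ := FType.exists_flag hp hq i
    exact ⟨Quot.mk _ F, FType.unique _ _ (hf F) hF⟩
end
end

section
/- Let p ≥ 3 and q = 1, and set n = p + q. The action of O(p,q) on the flag manifold F_{1,n-2} = {(V₁, V₂) : V₁ ⊆ V₂ ⊆ ℝⁿ, dim V₁ = 1, dim V₂ = n−2} has exactly 6 orbits. (By the correspondence established in the paper, this is the number of left-invariant Lorentzian metrics of signature (p,1) on H₃ × ℝ^{n−3} up to scaling and automorphisms.) -/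
open Module

noncomputable section

section Abstract

set_option linter.unusedSimpArgs false

/-- `B` is a symmetric form which is Lorentzian with reference unit timelike vector `t`. -/
structure Lor {E : Type*} [AddCommGroup E] [Module ℝ E] (B : LinearMap.BilinForm ℝ E)
    (t : E) : Prop where
  symm : ∀ x y, B x y = B y x
  tt : B t t = -1
  pos : ∀ x, B x t = 0 → x ≠ 0 → 0 < B x x

variable {E : Type*} [AddCommGroup E] [Module ℝ E] {B : LinearMap.BilinForm ℝ E} {t : E}

theorem Lor.causal (h : Lor B t) {x y : E} (hx : B x x ≤ 0) (hy : B y y ≤ 0) (hxy : B x y = 0)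
    (hx0 : x ≠ 0) (hy0 : y ≠ 0) :
    B x x = 0 ∧ B y y = 0 ∧ ∃ c : ℝ, c ≠ 0 ∧ y = c • x := by
  have hxt : B x t ≠ 0 := fun h0 => absurd (h.pos x h0 hx0) (not_lt.2 hx)
  have hyt : B y t ≠ 0 := fun h0 => absurd (h.pos y h0 hy0) (not_lt.2 hy)
  have hyx : B y x = 0 := by rw [h.symm, hxy]
  set z := B y t • x - B x t • y with hz
  have hzt : B z t = 0 := by
    simp [hz]; ring
  have hzz : B z z = (B y t) ^ 2 * B x x + (B x t) ^ 2 * B y y := by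
    simp [hz, hxy, hyx]; ring
  have hx2 : 0 < (B x t) ^ 2 := by positivity
  have hy2 : 0 < (B y t) ^ 2 := by positivity
  have hz0 : z = 0 := by
    by_contra hne
    have := h.pos z hzt hne
    nlinarith
  have h0 : B z z = 0 := by simp [hz0]
  rw [hzz] at h0
  have e1 : (B y t) ^ 2 * B x x ≤ 0 := mul_nonpos_of_nonneg_of_nonpos hy2.le hx
  have e2 : (B x t) ^ 2 * B y y ≤ 0 := mul_nonpos_of_nonneg_of_nonpos hx2.le hy
  refine ⟨?_, ?_, (B x t)⁻¹ * B y t, by positivity, ?_⟩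
  · have : (B y t) ^ 2 * B x x = 0 := by linarith
    exact (mul_eq_zero.1 this).resolve_left hy2.ne'
  · have : (B x t) ^ 2 * B y y = 0 := by linarith
    exact (mul_eq_zero.1 this).resolve_left hx2.ne'
  · have : B y t • x = B x t • y := sub_eq_zero.1 (hz ▸ hz0)
    rw [mul_smul, this, smul_smul, inv_mul_cancel₀ hxt, one_smul]

theorem Lor.change (h : Lor B t) {f : E} (hf : B f f = -1) : Lor B f where
  symm := h.symm
  tt := hf
  pos x hx hx0 := by
    by_contra hn
    have hf0 : f ≠ 0 := by rintro rfl; simp at hf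
    have := (h.causal (not_lt.1 hn) (by linarith) hx hx0 hf0).2.1
    linarith

theorem Lor.nondeg (h : Lor B t) : B.Nondegenerate := by
  have key : ∀ x, (∀ y, B x y = 0) → x = 0 := by
    intro x hx
    by_contra h0
    have := h.pos x (hx t) h0
    rw [hx x] at this
    exact lt_irrefl _ this
  exact ⟨key, fun y hy => key y fun x => by rw [h.symm, hy]⟩

theorem Lor.refl (h : Lor B t) : B.IsRefl := fun x y hxy => by rw [h.symm, hxy]

/-- The Gram condition for a Lorentz-orthonormal family with timelike index `i0`. -/
def LB {ι : Type*} [DecidableEq ι] (B : LinearMap.BilinForm ℝ E) (i0 : ι) (s : Set ι)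
    (b : ι → E) : Prop :=
  ∀ i ∈ s, ∀ j ∈ s, B (b i) (b j) = if i = j then (if i = i0 then -1 else 1) else 0

set_option maxHeartbeats 1000000 in
theorem Lor.extend [FiniteDimensional ℝ E] (h : Lor B t) {ι : Type*} [Fintype ι] [DecidableEq ι]
    (hn : finrank ℝ E = Fintype.card ι) (i0 : ι) (s : Set ι) (h0 : i0 ∈ s) (v : ι → E)
    (hv : LB B i0 s v) :
    ∃ b : Basis ι ℝ E, (∀ i ∈ s, b i = v i) ∧ LB B i0 Set.univ b := by
  have hf : B (v i0) (v i0) = -1 := by simpa using hv i0 h0 i0 h0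
  set f := v i0 with hfdef
  have hl := h.change hf
  have key : ∀ x, 0 ≤ B x x + 2 * (B x f * B x f) ∧ (B x x + 2 * (B x f * B x f) = 0 → x = 0) := by
    intro x
    have h1 : B (x + B x f • f) f = 0 := by simp [hf]
    have h2 : B (x + B x f • f) (x + B x f • f) = B x x + B x f * B x f := by
      simp [hf, h.symm f x]
    by_cases hx : x + B x f • f = 0
    · rw [hx] at h2
      simp at h2
      refine ⟨by nlinarith [mul_self_nonneg (B x f)], fun h3 => ?_⟩
      have : B x f = 0 := by
        have : B x f * B x f = 0 := by linarith
        simpa using this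
      simpa [this] using hx
    · have := hl.pos _ h1 hx
      have h4 := mul_self_nonneg (B x f)
      exact ⟨by linarith, fun h3 => by linarith⟩
  let core : InnerProductSpace.Core ℝ E :=
    { inner := fun x y => B x y + 2 * (B x f * B y f)
      conj_inner_symm := fun x y => by simp [h.symm y x]; ring
      re_inner_nonneg := fun x => by simpa using (key x).1
      add_left := fun x y z => by simp; ring
      smul_left := fun x y r => by simp; ring
      definite := fun x hx => (key x).2 hx }
  let _ : NormedAddCommGroup E := core.toNormedAddCommGroup
  let _ : InnerProductSpace ℝ E := InnerProductSpace.ofCore core.toCore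
  have hin : ∀ x y : E, inner ℝ x y = B x y + 2 * (B x f * B y f) := fun x y => rfl
  have hfi : ∀ i ∈ s, B (v i) f = if i = i0 then -1 else 0 := by
    intro i hi
    rw [hfdef, hv i hi i0 h0]
    split_ifs <;> simp_all
  have hon : Orthonormal ℝ (s.domRestrict v) := by
    rw [orthonormal_iff_ite]
    rintro ⟨i, hi⟩ ⟨j, hj⟩
    simp only [Set.domRestrict_apply, hin, hv i hi j hj, hfi i hi, hfi j hj, Subtype.mk.injEq]
    split_ifs <;> simp_all <;> norm_num
  obtain ⟨b, hb⟩ := hon.exists_orthonormalBasis_extension_of_card_eq hn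
  refine ⟨b.toBasis, fun i hi => by simpa using hb i hi, ?_⟩
  intro i _ j _
  have hbf : ∀ i, B (b i) f = if i = i0 then -1 else 0 := by
    intro i
    have h1 := (orthonormal_iff_ite.1 b.orthonormal) i i0
    rw [hin, hb i0 h0, ← hfdef, hf] at h1
    split_ifs at h1 ⊢ <;> linarith
  have h1 := (orthonormal_iff_ite.1 b.orthonormal) i j
  rw [hin, hbf, hbf] at h1
  simp only [OrthonormalBasis.coe_toBasis]
  split_ifs at h1 ⊢ <;> first | linarith | (simp_all; done)

theorem Lor.frame4 [FiniteDimensional ℝ E] (h : Lor B t) {ι : Type*} [Fintype ι] [DecidableEq ι]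
    (hn : finrank ℝ E = Fintype.card ι) (i0 i1 i2 i3 : ι) (h01 : i0 ≠ i1) (h02 : i0 ≠ i2)
    (h03 : i0 ≠ i3) (h12 : i1 ≠ i2) (h13 : i1 ≠ i3) (h23 : i2 ≠ i3) (f x y z : E)
    (hf : B f f = -1) (hx : B x x = 1) (hy : B y y = 1) (hz : B z z = 1)
    (hfx : B f x = 0) (hfy : B f y = 0) (hfz : B f z = 0)
    (hxy : B x y = 0) (hxz : B x z = 0) (hyz : B y z = 0) :
    ∃ b : Basis ι ℝ E, LB B i0 Set.univ b ∧ b i0 = f ∧ b i1 = x ∧ b i2 = y ∧ b i3 = z := by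
  obtain ⟨b, hb, hL⟩ := h.extend hn i0 {i0, i1, i2, i3} (by simp)
    (fun i => if i = i0 then f else if i = i1 then x else if i = i2 then y else z) (by
      have hxf : B x f = 0 := by rw [h.symm, hfx]
      have hyf : B y f = 0 := by rw [h.symm, hfy]
      have hzf : B z f = 0 := by rw [h.symm, hfz]
      have hyx : B y x = 0 := by rw [h.symm, hxy]
      have hzx : B z x = 0 := by rw [h.symm, hxz]
      have hzy : B z y = 0 := by rw [h.symm, hyz]
      intro i hi j hj
      simp only [Set.mem_insert_iff, Set.mem_singleton_iff] at hi hj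
      rcases hi with rfl | rfl | rfl | rfl <;> rcases hj with rfl | rfl | rfl | rfl <;>
        simp [*, Ne.symm h01, Ne.symm h02, Ne.symm h03, Ne.symm h12, Ne.symm h13, Ne.symm h23])
  refine ⟨b, hL, ?_, ?_, ?_, ?_⟩ <;> rw [hb _ (by simp)] <;> 
    simp [Ne.symm h01, Ne.symm h02, Ne.symm h03, Ne.symm h12, Ne.symm h13, Ne.symm h23]

theorem Lor.frame3 [FiniteDimensional ℝ E] (h : Lor B t) {ι : Type*} [Fintype ι] [DecidableEq ι]
    (hn : finrank ℝ E = Fintype.card ι) (i0 i1 i2 : ι) (h01 : i0 ≠ i1) (h02 : i0 ≠ i2)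
    (h12 : i1 ≠ i2) (f x y : E)
    (hf : B f f = -1) (hx : B x x = 1) (hy : B y y = 1)
    (hfx : B f x = 0) (hfy : B f y = 0) (hxy : B x y = 0) :
    ∃ b : Basis ι ℝ E, LB B i0 Set.univ b ∧ b i0 = f ∧ b i1 = x ∧ b i2 = y := by
  obtain ⟨b, hb, hL⟩ := h.extend hn i0 {i0, i1, i2} (by simp)
    (fun i => if i = i0 then f else if i = i1 then x else y) (by
      have hxf : B x f = 0 := by rw [h.symm, hfx]
      have hyf : B y f = 0 := by rw [h.symm, hfy]
      have hyx : B y x = 0 := by rw [h.symm, hxy]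
      intro i hi j hj
      simp only [Set.mem_insert_iff, Set.mem_singleton_iff] at hi hj
      rcases hi with rfl | rfl | rfl <;> rcases hj with rfl | rfl | rfl <;>
        simp [*, Ne.symm h01, Ne.symm h02, Ne.symm h12])
  refine ⟨b, hL, ?_, ?_, ?_⟩ <;> rw [hb _ (by simp)] <;> 
    simp [Ne.symm h01, Ne.symm h02, Ne.symm h12]

/-- Normalisation of a vector. -/
theorem exists_normalize (B : LinearMap.BilinForm ℝ E) (x : E) (hx : x ≠ 0) :
    ∃ c : ℝ, c ≠ 0 ∧ c • x ≠ 0 ∧ (0 < B x x → B (c • x) (c • x) = 1) ∧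
      (B x x < 0 → B (c • x) (c • x) = -1) ∧ (B x x = 0 → B (c • x) (c • x) = 0) := by
  rcases lt_trichotomy (B x x) 0 with hB | hB | hB
  · have hs : 0 < √(-(B x x)) := Real.sqrt_pos.2 (by linarith)
    refine ⟨(√(-(B x x)))⁻¹, by positivity, smul_ne_zero (by positivity) hx,
      fun h => by linarith, fun _ => ?_, fun h => by linarith⟩
    have h2 := Real.mul_self_sqrt (show 0 ≤ -(B x x) by linarith)
    simp only [map_smul, LinearMap.smul_apply, smul_eq_mul]
    field_simp
    nlinarith
  · exact ⟨1, one_ne_zero, by simpa using hx, fun h => by linarith, fun h => by linarith,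
      fun _ => by simpa using hB⟩
  · have hs : 0 < √(B x x) := Real.sqrt_pos.2 (by linarith)
    refine ⟨(√(B x x))⁻¹, by positivity, smul_ne_zero (by positivity) hx,
      fun _ => ?_, fun h => by linarith, fun h => by linarith⟩
    have h2 := Real.mul_self_sqrt (show 0 ≤ B x x by linarith)
    simp only [map_smul, LinearMap.smul_apply, smul_eq_mul]
    field_simp
    nlinarith

/-- A null vector is a sum of a unit spacelike and a unit timelike vector. -/
theorem Lor.null_split (h : Lor B t) {z w : E} (hz0 : z ≠ 0) (hz : B z z = 0) (hw : B w w < 0) :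
    ∃ s f : E, s + f = z ∧ B s s = 1 ∧ B f f = -1 ∧ B s f = 0 ∧
      ∀ x, B x z = 0 → B x w = 0 → B x s = 0 ∧ B x f = 0 := by
  have hw0 : w ≠ 0 := by rintro rfl; simp at hw
  have hzw : B z w ≠ 0 := fun h0 => by
    have := (h.causal hz.le hw.le h0 hz0 hw0).2.1
    linarith
  obtain ⟨r, hr⟩ : ∃ r, r = B z w := ⟨_, rfl⟩
  obtain ⟨d, hd⟩ : ∃ d, d = B w w := ⟨_, rfl⟩
  have hwz : B w z = r := by rw [h.symm, hr]
  rw [← hr] at hzw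
  refine ⟨(1/2 + d / (2 * r^2)) • z + (-(-r⁻¹)) • w + (-(d / r^2)) • z,
    (1/2 + d / (2 * r^2)) • z + (-r⁻¹) • w, ?_, ?_, ?_, ?_, ?_⟩
  · module
  · simp [hz, hwz, ← hr, ← hd]; field_simp; ring
  · simp [hz, hwz, ← hr, ← hd]; field_simp; ring
  · simp [hz, hwz, ← hr, ← hd]; field_simp; ring
  · intro x h1 h2
    simp [h1, h2]

theorem Lor.exists_timelike (h : Lor B t) (x y : E) (hx : B x x = 1) (hy : B y y = 1)
    (hxy : B x y = 0) : ∃ w, B w w < 0 ∧ B x w = 0 ∧ B y w = 0 := by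
  have hyx : B y x = 0 := by rw [h.symm, hxy]
  refine ⟨t - B t x • x - B t y • y, ?_, ?_, ?_⟩
  · simp [hx, hy, hxy, hyx, h.tt, h.symm x t, h.symm y t]
    nlinarith [mul_self_nonneg (B t x), mul_self_nonneg (B t y)]
  · simp [hx, hy, hxy, hyx, h.tt, h.symm x t, h.symm y t]
  · simp [hx, hy, hxy, hyx, h.tt, h.symm x t, h.symm y t]

theorem Lor.exists_timelike1 (h : Lor B t) (x : E) (hx : B x x = 1) :
    ∃ w, B w w < 0 ∧ B x w = 0 := by
  refine ⟨t - B t x • x, ?_, ?_⟩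
  · simp [hx, h.tt, h.symm x t]
    nlinarith [mul_self_nonneg (B t x)]
  · simp [hx, h.tt, h.symm x t]

theorem Lor.exists_timelike3 (h : Lor B t) (x y z : E) (hx : B x x = 1) (hy : B y y = 1)
    (hz : B z z = 1) (hxy : B x y = 0) (hxz : B x z = 0) (hyz : B y z = 0) :
    ∃ w, B w w = -1 ∧ B w x = 0 ∧ B w y = 0 ∧ B w z = 0 := by
  have hyx : B y x = 0 := by rw [h.symm, hxy]
  have hzx : B z x = 0 := by rw [h.symm, hxz]
  have hzy : B z y = 0 := by rw [h.symm, hyz]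
  set w := t - B t x • x - B t y • y - B t z • z with hw
  have hneg : B w w < 0 := by
    simp [hw, hx, hy, hz, hxy, hyx, hxz, hzx, hyz, hzy, h.tt, h.symm x t, h.symm y t, h.symm z t]
    nlinarith [mul_self_nonneg (B t x), mul_self_nonneg (B t y), mul_self_nonneg (B t z)]
  have hw0 : w ≠ 0 := by intro h0; simp [h0] at hneg
  obtain ⟨c, -, -, -, h1, -⟩ := exists_normalize B w hw0
  refine ⟨c • w, h1 hneg, ?_, ?_, ?_⟩ <;>
    simp [hw, hx, hy, hz, hxy, hyx, hxz, hzx, hyz, hzy]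

/-- Normal form of the line generator. -/
def nfV (k : Fin 6) (b0 b1 b3 : E) : E := ![b1, b1, b0, b3 + b0, b1 + b0, b1] k

/-- Normal form of the second generator of the orthogonal plane. -/
def nfE (k : Fin 6) (b0 b1 b3 : E) : E := ![b0, b3, b1, b1, b1 + b0, b3 + b0] k

theorem nfV_map (g : E →ₗ[ℝ] E) (k : Fin 6) (b0 b1 b3 : E) :
    g (nfV k b0 b1 b3) = nfV k (g b0) (g b1) (g b3) := by
  fin_cases k <;> simp [nfV]

theorem nfE_map (g : E →ₗ[ℝ] E) (k : Fin 6) (b0 b1 b3 : E) :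
    g (nfE k b0 b1 b3) = nfE k (g b0) (g b1) (g b3) := by
  fin_cases k <;> simp [nfE]

/-- The flag `(X, Y)` has normal form number `k`. -/
def NF {ι : Type*} [DecidableEq ι] (B : LinearMap.BilinForm ℝ E) (i0 i1 i2 i3 : ι)
    (k : Fin 6) (X Y : Submodule ℝ E) : Prop :=
  ∃ b : Basis ι ℝ E, LB B i0 Set.univ b ∧
    X = Submodule.span ℝ {nfV k (b i0) (b i1) (b i3)} ∧
    Y = B.orthogonal (Submodule.span ℝ {b i2, nfE k (b i0) (b i1) (b i3)})

theorem orth_map (g : E ≃ₗ[ℝ] E) (hg : ∀ x y, B (g x) (g y) = B x y) (W : Submodule ℝ E) :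
    (B.orthogonal W).map g.toLinearMap = B.orthogonal (W.map g.toLinearMap) := by
  ext y
  constructor
  · rintro ⟨x, hx, rfl⟩
    rintro _ ⟨w, hw, rfl⟩
    have := hx w hw
    show B (g w) (g x) = 0
    rw [hg]; exact this
  · intro hy
    refine ⟨g.symm y, ?_, by simp⟩
    intro w hw
    have h1 : B (g w) y = 0 := hy (g w) ⟨w, hw, rfl⟩
    show B w (g.symm y) = 0
    rw [← hg]; simpa using h1

theorem NF.map {ι : Type*} [DecidableEq ι] {i0 i1 i2 i3 : ι} {k : Fin 6} {X Y : Submodule ℝ E}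
    (h : NF B i0 i1 i2 i3 k X Y) (g : E ≃ₗ[ℝ] E) (hg : ∀ x y, B (g x) (g y) = B x y) :
    NF B i0 i1 i2 i3 k (X.map g.toLinearMap) (Y.map g.toLinearMap) := by
  obtain ⟨b, hb, rfl, rfl⟩ := h
  refine ⟨b.map g, ?_, ?_, ?_⟩
  · intro i hi j hj
    simpa [hg] using hb i hi j hj
  · rw [Submodule.map_span, Set.image_singleton, nfV_map]; simp
  · rw [orth_map g hg, Submodule.map_span, Set.image_pair, nfE_map]; simp

theorem NF.trans {ι : Type*} [Fintype ι] [DecidableEq ι] {i0 i1 i2 i3 : ι} {k : Fin 6}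
    {X Y X' Y' : Submodule ℝ E}
    (h : NF B i0 i1 i2 i3 k X Y) (h' : NF B i0 i1 i2 i3 k X' Y') :
    ∃ g : E ≃ₗ[ℝ] E, (∀ x y, B (g x) (g y) = B x y) ∧
      X = X'.map g.toLinearMap ∧ Y = Y'.map g.toLinearMap := by
  obtain ⟨b, hb, rfl, rfl⟩ := h
  obtain ⟨c, hc, rfl, rfl⟩ := h'
  have hg : ∀ x y, B (c.equiv b (Equiv.refl ι) x) (c.equiv b (Equiv.refl ι) y) = B x y := by
    have : B.compl₁₂ (c.equiv b (Equiv.refl ι)).toLinearMap (c.equiv b (Equiv.refl ι)).toLinearMap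
        = B := by
      refine LinearMap.ext_basis c c fun i j => ?_
      have h1 := hb i trivial j trivial
      have h2 := hc i trivial j trivial
      rw [h2, ← h1]
      simp
    intro x y
    exact congrArg (fun f => f x y) this
  refine ⟨c.equiv b (Equiv.refl ι), hg, ?_, ?_⟩
  · rw [Submodule.map_span, Set.image_singleton, nfV_map]; simp
  · rw [orth_map _ hg, Submodule.map_span, Set.image_pair, nfE_map]; simp

/-- Numerical invariants of the normal forms. -/
def nfa (k : Fin 6) : ℝ := ![1, 1, -1, 0, 0, 1] k
/-- Numerical invariants of the normal forms. -/
def nfc (k : Fin 6) : ℝ := ![-1, 1, 1, 1, 0, 0] k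

theorem nf_inj (k l : Fin 6) (ha : nfa k = nfa l) (hc : nfc k = nfc l) : k = l := by
  revert ha hc
  fin_cases k <;> fin_cases l <;> simp [nfa, nfc] <;> norm_num

theorem nfa_mem (k : Fin 6) : nfa k = 1 ∨ nfa k = -1 ∨ nfa k = 0 := by
  fin_cases k <;> simp [nfa]

theorem nfc_mem (k : Fin 6) : nfc k = 1 ∨ nfc k = -1 ∨ nfc k = 0 := by
  fin_cases k <;> simp [nfc]

theorem sign_eq {a b r s : ℝ} (ha : a = 1 ∨ a = -1 ∨ a = 0) (hb : b = 1 ∨ b = -1 ∨ b = 0)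
    (h1 : a = r ^ 2 * b) (h2 : b = s ^ 2 * a) : a = b := by
  have hr := sq_nonneg r
  have hs := sq_nonneg s
  rcases ha with rfl | rfl | rfl <;> rcases hb with rfl | rfl | rfl <;>
    first | rfl | (exfalso; nlinarith)

theorem LB.gram {ι : Type*} [DecidableEq ι] {i0 i1 i2 i3 : ι} (h01 : i0 ≠ i1) (h02 : i0 ≠ i2)
    (h03 : i0 ≠ i3) (h12 : i1 ≠ i2) (h13 : i1 ≠ i3) (h23 : i2 ≠ i3) {b : ι → E}
    (hb : LB B i0 Set.univ b) (k : Fin 6) :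
    B (nfV k (b i0) (b i1) (b i3)) (nfV k (b i0) (b i1) (b i3)) = nfa k ∧
    B (nfE k (b i0) (b i1) (b i3)) (nfE k (b i0) (b i1) (b i3)) = nfc k ∧
    B (b i2) (b i2) = 1 ∧ B (b i2) (nfE k (b i0) (b i1) (b i3)) = 0 ∧
    B (nfE k (b i0) (b i1) (b i3)) (b i2) = 0 ∧
    B (b i2) (nfV k (b i0) (b i1) (b i3)) = 0 ∧
    B (nfE k (b i0) (b i1) (b i3)) (nfV k (b i0) (b i1) (b i3)) = 0 := by
  have hb' : ∀ i j, B (b i) (b j) = if i = j then (if i = i0 then -1 else 1) else 0 :=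
    fun i j => hb i trivial j trivial
  fin_cases k <;>
    simp [nfV, nfE, nfa, nfc, hb', h01, h02, h03, h12, h13, h23, h01.symm, h02.symm, h03.symm,
      h12.symm, h13.symm, h23.symm]

theorem plane_sign {u e u' e' : E} (hu : B u u = 1) (hue : B u e = 0) (heu : B e u = 0)
    (hu' : B u' u' = 1) (hue' : B u' e' = 0)
    (h1 : u' ∈ Submodule.span ℝ {u, e}) (h2 : e' ∈ Submodule.span ℝ {u, e}) :
    ∃ r : ℝ, B e' e' = r ^ 2 * B e e := by
  obtain ⟨a, b, rfl⟩ := Submodule.mem_span_pair.1 h1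
  obtain ⟨c, d, rfl⟩ := Submodule.mem_span_pair.1 h2
  simp [hu, hue, heu] at hu' hue' ⊢
  refine ⟨a * d - b * c, ?_⟩
  generalize B e e = q at *
  linear_combination (-c*c - d*d*q) * hu' + (a * c + b*d*q) * hue'

theorem Lor.nf_unique [FiniteDimensional ℝ E] (h : Lor B t) {ι : Type*} [DecidableEq ι]
    {i0 i1 i2 i3 : ι} (h01 : i0 ≠ i1) (h02 : i0 ≠ i2)
    (h03 : i0 ≠ i3) (h12 : i1 ≠ i2) (h13 : i1 ≠ i3) (h23 : i2 ≠ i3)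
    {k l : Fin 6} {X Y : Submodule ℝ E}
    (hk : NF B i0 i1 i2 i3 k X Y) (hl : NF B i0 i1 i2 i3 l X Y) : k = l := by
  obtain ⟨b, hb, rfl, rfl⟩ := hk
  obtain ⟨c, hc, hX, hY⟩ := hl
  have hY' := congrArg B.orthogonal hY
  rw [LinearMap.BilinForm.orthogonal_orthogonal h.nondeg h.refl,
    LinearMap.BilinForm.orthogonal_orthogonal h.nondeg h.refl] at hY'
  obtain ⟨p1, p2, p3, p4, p5, -, -⟩ := LB.gram h01 h02 h03 h12 h13 h23 hb k
  obtain ⟨q1, q2, q3, q4, q5, -, -⟩ := LB.gram h01 h02 h03 h12 h13 h23 hc l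
  apply nf_inj
  · have m1 : nfV k (b i0) (b i1) (b i3) ∈ Submodule.span ℝ {nfV l (c i0) (c i1) (c i3)} :=
      hX ▸ Submodule.mem_span_singleton_self _
    have m2 : nfV l (c i0) (c i1) (c i3) ∈ Submodule.span ℝ {nfV k (b i0) (b i1) (b i3)} :=
      hX ▸ Submodule.mem_span_singleton_self _
    obtain ⟨r, hr⟩ := Submodule.mem_span_singleton.1 m1
    obtain ⟨s, hs⟩ := Submodule.mem_span_singleton.1 m2
    refine sign_eq (r := r) (s := s) (nfa_mem k) (nfa_mem l) ?_ ?_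
    · rw [← p1, ← hr, ← q1]; simp; ring
    · rw [← q1, ← hs, ← p1]; simp; ring
  · obtain ⟨r, hr⟩ := plane_sign (B := B) q3 q4 q5 p3 p4
      (hY' ▸ Submodule.subset_span (by simp)) (hY' ▸ Submodule.subset_span (by simp))
    obtain ⟨s, hs⟩ := plane_sign (B := B) p3 p4 p5 q3 q4
      (hY' ▸ Submodule.subset_span (by simp)) (hY' ▸ Submodule.subset_span (by simp))
    rw [p2, q2] at hr hs
    exact sign_eq (nfc_mem k) (nfc_mem l) hr hs

theorem finrank_pair_s2 {u e : E} (hu : B u u = 1) (hue : B u e = 0) (he : e ≠ 0) :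
    finrank ℝ (Submodule.span ℝ {u, e}) = 2 := by
  have hli : LinearIndependent ℝ ![u, e] := by
    rw [LinearIndependent.pair_iff]
    intro a b hab
    have h1 : B u (a • u + b • e) = 0 := by rw [hab]; simp
    have ha : a = 0 := by simpa [hu, hue] using h1
    refine ⟨ha, ?_⟩
    rw [ha] at hab
    simpa [he] using hab
  have hr : Set.range ![u, e] = {u, e} := by
    ext x
    simp [Fin.exists_fin_two, eq_comm, or_comm]
  have := finrank_span_eq_card hli
  rw [hr] at this
  simpa using this

theorem nf_ne {ι : Type*} {i0 i1 i3 : ι} (h01 : i0 ≠ i1) (h03 : i0 ≠ i3) (b : Basis ι ℝ E)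
    (k : Fin 6) :
    nfV k (b i0) (b i1) (b i3) ≠ 0 ∧ nfE k (b i0) (b i1) (b i3) ≠ 0 := by
  have s1 : b i1 + b i0 ≠ 0 := fun h => by
    have := congrArg (fun x => b.repr x i0) h
    simp [Finsupp.single_apply, h01.symm] at this
  have s2 : b i3 + b i0 ≠ 0 := fun h => by
    have := congrArg (fun x => b.repr x i0) h
    simp [Finsupp.single_apply, h03.symm] at this
  fin_cases k <;> simp [nfV, nfE, b.ne_zero, s1, s2]

/-- Every normal form occurs. -/
theorem Lor.nf_exists [FiniteDimensional ℝ E] (h : Lor B t) {ι : Type*} [Fintype ι] [DecidableEq ι]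
    {i0 i1 i2 i3 : ι} (h01 : i0 ≠ i1) (h02 : i0 ≠ i2)
    (h03 : i0 ≠ i3) (h12 : i1 ≠ i2) (h13 : i1 ≠ i3) (h23 : i2 ≠ i3)
    (hn : finrank ℝ E = Fintype.card ι) (k : Fin 6) :
    ∃ X Y : Submodule ℝ E, X ≤ Y ∧ finrank ℝ X = 1 ∧ finrank ℝ Y = finrank ℝ E - 2 ∧
      NF B i0 i1 i2 i3 k X Y := by
  obtain ⟨b, -, hb⟩ := h.extend hn i0 {i0} rfl (fun _ => t) (by
    rintro i rfl j rfl; simp [h.tt])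
  obtain ⟨p1, p2, p3, p4, p5, p6, p7⟩ := LB.gram h01 h02 h03 h12 h13 h23 hb k
  obtain ⟨n1, n2⟩ := nf_ne h01 h03 b k
  refine ⟨_, _, ?_, ?_, ?_, b, hb, rfl, rfl⟩
  · rw [Submodule.span_singleton_le_iff_mem]
    intro w hw
    obtain ⟨x, y, rfl⟩ := Submodule.mem_span_pair.1 hw
    show B _ _ = 0
    simp [p6, p7]
  · exact finrank_span_singleton n1
  · rw [LinearMap.BilinForm.finrank_orthogonal h.nondeg, finrank_pair_s2 p3 p4 n2]

theorem span_smul {c : ℝ} (hc : c ≠ 0) (x : E) :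
    Submodule.span ℝ {c • x} = Submodule.span ℝ {x} :=
  Submodule.span_singleton_smul_eq (IsUnit.mk0 c hc) x

/-- In a subspace of dimension at least two there is a nonzero vector orthogonal to a given one. -/
theorem exists_orth [FiniteDimensional ℝ E] (U : Submodule ℝ E) (hU : 2 ≤ finrank ℝ U) (y : E) :
    ∃ x ∈ U, x ≠ 0 ∧ B x y = 0 := by
  have hlt : finrank ℝ ℝ < finrank ℝ U := by simp; omega
  obtain ⟨x, hx, hx0⟩ := Submodule.exists_mem_ne_zero_of_ne_bot
    (LinearMap.ker_ne_bot_of_finrank_lt (f := (B.flip y).domRestrict U) hlt)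
  refine ⟨x, x.2, by simpa using hx0, ?_⟩
  simpa using hx

set_option maxHeartbeats 1000000 in
theorem Lor.nf_cover [FiniteDimensional ℝ E] (h : Lor B t) {ι : Type*} [Fintype ι] [DecidableEq ι]
    {i0 i1 i2 i3 : ι} (h01 : i0 ≠ i1) (h02 : i0 ≠ i2)
    (h03 : i0 ≠ i3) (h12 : i1 ≠ i2) (h13 : i1 ≠ i3) (h23 : i2 ≠ i3)
    (hn : finrank ℝ E = Fintype.card ι) (h2 : 2 ≤ finrank ℝ E) (X Y : Submodule ℝ E) (hXY : X ≤ Y)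
    (hX : finrank ℝ X = 1) (hY : finrank ℝ Y = finrank ℝ E - 2) :
    ∃ k, NF B i0 i1 i2 i3 k X Y := by
  -- the line
  obtain ⟨v, hv0, rfl⟩ : ∃ v, v ≠ 0 ∧ X = Submodule.span ℝ {v} := by
    obtain ⟨v, hv0, hv⟩ := finrank_eq_one_iff'.1 hX
    refine ⟨v, by simpa using hv0, le_antisymm ?_ ?_⟩
    · intro x hx
      obtain ⟨c, hc⟩ := hv ⟨x, hx⟩
      exact Submodule.mem_span_singleton.2 ⟨c, congrArg Subtype.val hc⟩
    · rw [Submodule.span_singleton_le_iff_mem]; exact v.2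
  -- the plane
  obtain ⟨U, hUdef⟩ : ∃ U, U = B.orthogonal Y := ⟨_, rfl⟩
  have hU : finrank ℝ U = 2 := by
    rw [hUdef, LinearMap.BilinForm.finrank_orthogonal h.nondeg]; omega
  have hYU : Y = B.orthogonal U := by
    rw [hUdef, LinearMap.BilinForm.orthogonal_orthogonal h.nondeg h.refl]
  obtain ⟨u₀, hu₀U, hu₀, hu₀t⟩ := exists_orth (B := B) U hU.ge t
  obtain ⟨cu, hcu, -, hu, -, -⟩ := exists_normalize B u₀ hu₀
  replace hu := hu (h.pos u₀ hu₀t hu₀)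
  have huU : cu • u₀ ∈ U := U.smul_mem _ hu₀U
  generalize cu • u₀ = u at hu huU
  obtain ⟨e₀, he₀U, he₀, he₀u⟩ := exists_orth (B := B) U hU.ge u
  obtain ⟨ce, hce, hne, he1, he2, he3⟩ := exists_normalize B e₀ he₀
  have heU : ce • e₀ ∈ U := U.smul_mem _ he₀U
  have heu : B (ce • e₀) u = 0 := by simp [he₀u]
  have hec : B (ce • e₀) (ce • e₀) = 1 ∨ B (ce • e₀) (ce • e₀) = -1 ∨
      B (ce • e₀) (ce • e₀) = 0 := by
    rcases lt_trichotomy (B e₀ e₀) 0 with h | h | h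
    exacts [.inr (.inl (he2 h)), .inr (.inr (he3 h)), .inl (he1 h)]
  clear he1 he2 he3
  generalize ce • e₀ = e at hne heU heu hec
  have hue : B u e = 0 := by rw [h.symm, heu]
  have hUs : U = Submodule.span ℝ {u, e} := by
    symm
    apply Submodule.eq_of_le_of_finrank_eq
    · rw [Submodule.span_le]
      rintro x (rfl | rfl) <;> assumption
    · rw [finrank_pair_s2 hu hue hne, hU]
  have hvY : v ∈ B.orthogonal U := hYU ▸ hXY (Submodule.mem_span_singleton_self v)
  obtain ⟨cv, hcv, hnv, hv1, hv2, hv3⟩ := exists_normalize B v hv0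
  rw [← span_smul hcv v]
  have huv : B u (cv • v) = 0 := by
    have : B u v = 0 := hvY u huU
    simp [this]
  have hev : B e (cv • v) = 0 := by
    have : B e v = 0 := hvY e heU
    simp [this]
  have hvc : B (cv • v) (cv • v) = 1 ∨ B (cv • v) (cv • v) = -1 ∨
      B (cv • v) (cv • v) = 0 := by
    rcases lt_trichotomy (B v v) 0 with h | h | h
    exacts [.inr (.inl (hv2 h)), .inr (.inr (hv3 h)), .inl (hv1 h)]
  clear hv1 hv2 hv3
  subst hYU
  clear hvY hXY hX
  generalize cv • v = w at hnv huv hev hvc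
  have hvu : B w u = 0 := by rw [h.symm, huv]
  have hve : B w e = 0 := by rw [h.symm, hev]
  rw [hUs]
  clear hY hUdef hU hu₀U he₀U heU huU hUs
  rcases hvc with hw | hw | hw <;> rcases hec with he | he | he
  · -- (1, 1)
    obtain ⟨f, f0, f1, f2, f3⟩ := h.exists_timelike3 w u e hw hu he hvu hve hue
    obtain ⟨b, hb, rfl, rfl, rfl, rfl⟩ := h.frame4 hn i0 i1 i2 i3 h01 h02 h03 h12 h13 h23 f w u e
      f0 hw hu he f1 f2 f3 hvu hve hue
    exact ⟨1, b, hb, rfl, rfl⟩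
  · -- (1, -1)
    obtain ⟨b, hb, rfl, rfl, rfl⟩ := h.frame3 hn i0 i1 i2 h01 h02 h12 e w u
      he hw hu hev heu hvu
    exact ⟨0, b, hb, rfl, rfl⟩
  · -- (1, 0)
    obtain ⟨m, m0, m1, m2⟩ := h.exists_timelike w u hw hu hvu
    obtain ⟨s, f, rfl, hs, hf, hsf, H⟩ := h.null_split hne he m0
    obtain ⟨a1, a2⟩ := H w hve m1
    obtain ⟨a3, a4⟩ := H u hue m2
    obtain ⟨b, hb, rfl, rfl, rfl, rfl⟩ := h.frame4 hn i0 i1 i2 i3 h01 h02 h03 h12 h13 h23 f w u s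
      hf hw hu hs (by rw [h.symm, a2]) (by rw [h.symm, a4]) (by rw [h.symm, hsf]) hvu a1 a3
    exact ⟨5, b, hb, rfl, rfl⟩
  · -- (-1, 1)
    obtain ⟨b, hb, rfl, rfl, rfl⟩ := h.frame3 hn i0 i1 i2 h01 h02 h12 w e u
      hw he hu hve hvu heu
    exact ⟨2, b, hb, rfl, rfl⟩
  · have := (h.causal (by linarith) (by linarith) hve hnv hne).1
    linarith
  · have := (h.causal (by linarith) (by linarith) hve hnv hne).1
    linarith
  · -- (0, 1)
    obtain ⟨m, m0, m1, m2⟩ := h.exists_timelike e u he hu heu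
    obtain ⟨s, f, rfl, hs, hf, hsf, H⟩ := h.null_split hnv hw m0
    obtain ⟨a1, a2⟩ := H e hev m1
    obtain ⟨a3, a4⟩ := H u huv m2
    obtain ⟨b, hb, rfl, rfl, rfl, rfl⟩ := h.frame4 hn i0 i1 i2 i3 h01 h02 h03 h12 h13 h23 f e u s
      hf he hu hs (by rw [h.symm, a2]) (by rw [h.symm, a4]) (by rw [h.symm, hsf]) heu a1 a3
    exact ⟨3, b, hb, rfl, rfl⟩
  · have := (h.causal (by linarith) (by linarith) hve hnv hne).2.1
    linarith
  · -- (0, 0)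
    obtain ⟨-, -, c, hc, rfl⟩ := h.causal hw.le he.le hve hnv hne
    obtain ⟨m, m0, m1⟩ := h.exists_timelike1 u hu
    obtain ⟨s, f, rfl, hs, hf, hsf, H⟩ := h.null_split hnv hw m0
    obtain ⟨a1, a2⟩ := H u huv m1
    obtain ⟨b, hb, rfl, rfl, rfl⟩ := h.frame3 hn i0 i1 i2 h01 h02 h12 f s u
      hf hs hu (by rw [h.symm, hsf]) (by rw [h.symm, a2]) (by rw [h.symm, a1])
    refine ⟨4, b, hb, rfl, ?_⟩
    congr 1
    rw [Submodule.span_insert, span_smul hc, ← Submodule.span_insert]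
    rfl

end Abstract

theorem stdForm_apply' (p : ℕ) (x y : Fin (p + 1) → ℝ) :
    stdForm p 1 x y = ∑ i : Fin p, x i.castSucc * y i.castSucc - x (Fin.last p) * y (Fin.last p) := by
  simp only [stdForm, Matrix.toLinearMap₂'_apply, Matrix.diagonal_apply]
  simp [Fin.sum_univ_castSucc, Fin.castSucc_ne_last]
  ring_nf

theorem lor_std (p : ℕ) : Lor (stdForm p 1) (Pi.single (Fin.last p) 1) where
  symm x y := by
    simp only [stdForm_apply']
    simp only [mul_comm]
  tt := by
    rw [stdForm_apply']
    simp [Fin.castSucc_ne_last]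
  pos x hx hx0 := by
    rw [stdForm_apply'] at hx ⊢
    have hl : x (Fin.last p) = 0 := by simpa [Fin.castSucc_ne_last] using hx
    rw [hl, mul_zero, sub_zero]
    obtain ⟨j, hj⟩ : ∃ j, x j ≠ 0 := by
      by_contra hn
      push Not at hn
      exact hx0 (funext hn)
    rcases Fin.eq_castSucc_or_eq_last j with ⟨i, rfl⟩ | rfl
    · exact Finset.sum_pos' (fun i _ => mul_self_nonneg _)
        ⟨i, Finset.mem_univ _, mul_self_pos.2 hj⟩
    · exact absurd hl hj

/-- If `p ≥ 3` and `q = 1`, the action of `O(p,q)` on the flag manifold `F_{1, p+q-2}`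
has exactly 6 orbits. -/
theorem orbit_count_of_q_eq_one (p : ℕ) (hp : 3 ≤ p) :
    Nat.card (Quot (orbitRel p 1)) = 6 := by
  have h := lor_std p
  obtain ⟨i0, hi0⟩ : ∃ i : Fin (p + 1), (i : ℕ) = 0 := ⟨⟨0, by omega⟩, rfl⟩
  obtain ⟨i1, hi1⟩ : ∃ i : Fin (p + 1), (i : ℕ) = 1 := ⟨⟨1, by omega⟩, rfl⟩
  obtain ⟨i2, hi2⟩ : ∃ i : Fin (p + 1), (i : ℕ) = 2 := ⟨⟨2, by omega⟩, rfl⟩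
  obtain ⟨i3, hi3⟩ : ∃ i : Fin (p + 1), (i : ℕ) = 3 := ⟨⟨3, by omega⟩, rfl⟩
  have h01 : i0 ≠ i1 := by rintro rfl; omega
  have h02 : i0 ≠ i2 := by rintro rfl; omega
  have h03 : i0 ≠ i3 := by rintro rfl; omega
  have h12 : i1 ≠ i2 := by rintro rfl; omega
  have h13 : i1 ≠ i3 := by rintro rfl; omega
  have h23 : i2 ≠ i3 := by rintro rfl; omega
  have hn : finrank ℝ (Fin (p + 1) → ℝ) = p + 1 := by simp
  have hcover : ∀ F : FlagPQ p 1, ∃ k, NF (stdForm p 1) i0 i1 i2 i3 k F.1.1 F.1.2 := fun F =>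
    h.nf_cover h01 h02 h03 h12 h13 h23 (by simp) (by omega) F.1.1 F.1.2 F.2.1 F.2.2.1
      (by rw [hn]; exact F.2.2.2)
  choose inv hinv using hcover
  have huniq : ∀ (F : FlagPQ p 1) (k : Fin 6),
      NF (stdForm p 1) i0 i1 i2 i3 k F.1.1 F.1.2 → inv F = k := fun F k hk =>
    h.nf_unique h01 h02 h03 h12 h13 h23 (hinv F) hk
  have hinvar : ∀ F G : FlagPQ p 1, orbitRel p 1 F G → inv F = inv G := by
    rintro F G ⟨g, hg, e1, e2⟩
    apply huniq
    rw [e1, e2]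
    exact (hinv G).map g hg
  have hbij : Function.Bijective (Quot.lift inv hinvar) := by
    constructor
    · rintro ⟨F⟩ ⟨G⟩ hFG
      apply Quot.sound
      have hFG' : inv F = inv G := hFG
      have h1 := hinv F
      rw [hFG'] at h1
      exact h1.trans (hinv G)
    · intro k
      obtain ⟨X, Y, hXY, hX, hY, hNF⟩ := h.nf_exists h01 h02 h03 h12 h13 h23 (by simp) k
      exact ⟨Quot.mk _ ⟨(X, Y), hXY, hX, by rw [hY, hn]⟩, huniq _ k hNF⟩
  rw [Nat.card_eq_of_bijective _ hbij]
  simp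
end
end

section
/- Let p = q = 2, so n = 4. The action of O(2,2) on the flag manifold F_{1,2} = {(V₁, V₂) : V₁ ⊆ V₂ ⊆ ℝ⁴, dim V₁ = 1, dim V₂ = 2} has exactly 10 orbits. (By the correspondence established in the paper, this is the number of left-invariant pseudo-Riemannian metrics of signature (2,2) on H₃ × ℝ up to scaling and automorphisms.) -/
open Module

noncomputable section

/-- Coordinate formula for the form. -/
lemma std_apply (x y : Fin (2 + 2) → ℝ) :
    stdForm 2 2 x y = x 0 * y 0 + x 1 * y 1 - x 2 * y 2 - x 3 * y 3 := by
  simp [stdForm, Matrix.toLinearMap₂'_apply, Matrix.diagonal_apply, Fin.sum_univ_succ]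
  ring

/-- A linear isometry is an automorphism. -/
lemma exists_equiv (f : (Fin (2 + 2) → ℝ) →ₗ[ℝ] (Fin (2 + 2) → ℝ))
    (hf : ∀ x y, stdForm 2 2 (f x) (f y) = stdForm 2 2 x y) :
    ∃ g : (Fin (2 + 2) → ℝ) ≃ₗ[ℝ] (Fin (2 + 2) → ℝ), ∀ x, g x = f x := by
  have hinj : Function.Injective f := by
    rw [← LinearMap.ker_eq_bot, LinearMap.ker_eq_bot']
    intro x hx
    have h : ∀ y, stdForm 2 2 x y = 0 := fun y => by rw [← hf, hx]; simp
    ext i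
    have := h (Pi.single i 1)
    rw [std_apply] at this
    fin_cases i <;> simpa using this
  exact ⟨LinearEquiv.ofInjectiveEndo f hinj, fun x => rfl⟩

/-- The ten standard flags, as pairs of spanning vectors. -/
def sv : Fin 10 → (Fin (2 + 2) → ℝ) :=
  ![![1, 0, 0, 0], ![0, 0, 1, 0], ![1, 0, 0, 0], ![0, 0, 1, 0], ![1, 0, 1, 0],
    ![1, 0, 1, 0], ![1, 0, 1, 0], ![1, 0, 0, 0], ![0, 0, 1, 0], ![1, 0, 1, 0]]

def sw : Fin 10 → (Fin (2 + 2) → ℝ) :=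
  ![![0, 1, 0, 0], ![0, 0, 0, 1], ![0, 0, 1, 0], ![1, 0, 0, 0], ![1, 0, -1, 0],
    ![0, 1, 0, 0], ![0, 0, 0, 1], ![0, 1, 1, 0], ![1, 0, 0, 1], ![0, 1, 0, 1]]

/-- The pair `(v, w)` spans a flag equivalent to a standard one. -/
def Red (v w : Fin (2 + 2) → ℝ) : Prop :=
  finrank ℝ (Submodule.span ℝ {v, w}) = 2 →
  ∃ i : Fin 10, ∃ g : (Fin (2 + 2) → ℝ) ≃ₗ[ℝ] (Fin (2 + 2) → ℝ),
    (∀ x y, stdForm 2 2 (g x) (g y) = stdForm 2 2 x y) ∧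
    Submodule.span ℝ {sv i} = (Submodule.span ℝ {v}).map g.toLinearMap ∧
    Submodule.span ℝ {sv i, sw i} = (Submodule.span ℝ {v, w}).map g.toLinearMap

lemma red_std (i : Fin 10) : Red (sv i) (sw i) :=
  fun _ => ⟨i, LinearEquiv.refl ℝ _, fun _ _ => rfl, by ext; simp, by ext; simp⟩

lemma red_of_eq {v w v' w' : Fin (2 + 2) → ℝ} (h : Red v' w')
    (h1 : Submodule.span ℝ {v'} = Submodule.span ℝ {v})
    (h2 : Submodule.span ℝ {v', w'} = Submodule.span ℝ {v, w}) : Red v w := by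
  intro hfr
  obtain ⟨i, g, hg, ha, hb⟩ := h (by rw [h2, hfr])
  exact ⟨i, g, hg, by rw [ha, h1], by rw [hb, h2]⟩

lemma red_smul {v w : Fin (2 + 2) → ℝ} (c d e : ℝ) (hc : c ≠ 0) (hd : d ≠ 0)
    (h : Red (c • v) (d • w + e • v)) : Red v w := by
  refine red_of_eq h (Submodule.span_singleton_smul_eq (IsUnit.mk0 _ hc) v) ?_
  have hv : v ∈ Submodule.span ℝ {c • v, d • w + e • v} := by
    rw [Submodule.mem_span_pair]
    exact ⟨c⁻¹, 0, by simp [smul_smul, hc]⟩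
  apply le_antisymm
  · rw [Submodule.span_le]
    rintro x (rfl | rfl)
    · exact Submodule.smul_mem _ _ (Submodule.subset_span (by simp))
    · exact Submodule.add_mem _ (Submodule.smul_mem _ _ (Submodule.subset_span (by simp)))
        (Submodule.smul_mem _ _ (Submodule.subset_span (by simp)))
  · rw [Submodule.span_le]
    rintro x (rfl | rfl)
    · exact hv
    · have : d⁻¹ • ((d • x + e • v) - e • v) = x := by simp [smul_smul, hd]
      have h2 : d⁻¹ • ((d • x + e • v) - e • v) ∈ Submodule.span ℝ {c • v, d • x + e • v} :=
        Submodule.smul_mem _ _ (Submodule.sub_mem _ (Submodule.subset_span (by simp))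
          (Submodule.smul_mem _ _ hv))
      rwa [this] at h2

lemma red_iso {v w : Fin (2 + 2) → ℝ} (f : (Fin (2 + 2) → ℝ) →ₗ[ℝ] (Fin (2 + 2) → ℝ))
    (hf : ∀ x y, stdForm 2 2 (f x) (f y) = stdForm 2 2 x y) (h : Red (f v) (f w)) : Red v w := by
  obtain ⟨g, hg⟩ := exists_equiv f hf
  intro hfr
  have hsp : Submodule.span ℝ {f v, f w} = (Submodule.span ℝ {v, w}).map g.toLinearMap := by
    simp [Submodule.map_span, Set.image_pair, hg]
  obtain ⟨i, k, hk, ha, hb⟩ := h (by rw [hsp]; exact (LinearEquiv.finrank_map_eq g _).trans hfr)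
  refine ⟨i, g.trans k, fun x y => ?_, ?_, ?_⟩
  · simp [hk, hg, hf]
  · rw [ha]; simp [Submodule.map_span, hg]
  · rw [hb]; simp [Submodule.map_span, Set.image_pair, hg]

lemma red_degen (u : Fin (2 + 2) → ℝ) {v w : Fin (2 + 2) → ℝ}
    (hv : v ∈ Submodule.span ℝ {u}) (hw : w ∈ Submodule.span ℝ {u}) : Red v w := by
  intro hfr
  exfalso
  have h1 : Submodule.span ℝ {v, w} ≤ Submodule.span ℝ {u} := by
    rw [Submodule.span_le]
    rintro x (rfl | rfl) <;> assumption
  have h2 := Submodule.finrank_mono h1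
  have h3 := finrank_span_le_card (R := ℝ) ({u} : Set (Fin (2 + 2) → ℝ))
  have h4 := h2.trans h3
  rw [hfr] at h4
  simp at h4

/-- Matrix version on coordinates. -/
lemma red_mat (A : Matrix (Fin (2 + 2)) (Fin (2 + 2)) ℝ) {v w : Fin (2 + 2) → ℝ}
    (hA : ∀ x y, stdForm 2 2 (A.mulVec x) (A.mulVec y) = stdForm 2 2 x y)
    (h : Red (A.mulVec v) (A.mulVec w)) : Red v w :=
  red_iso A.mulVecLin hA h

lemma red_rot1 (c s : ℝ) (hcs : c ^ 2 + s ^ 2 = 1) (a b p q a' b' p' q' : ℝ)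
    (h : Red ![c * a + s * b, -s * a + c * b, p, q] ![c * a' + s * b', -s * a' + c * b', p', q']) :
    Red ![a, b, p, q] ![a', b', p', q'] := by
  refine red_mat !![c, s, 0, 0; -s, c, 0, 0; 0, 0, 1, 0; 0, 0, 0, 1] (fun x y => ?_) ?_
  · simp [std_apply, Matrix.mulVec, dotProduct, Fin.sum_univ_succ]
    grind
  · convert h using 1 <;> ext i <;> fin_cases i <;>
      simp [Matrix.mulVec, dotProduct, Fin.sum_univ_succ]

lemma red_rot2 (c s : ℝ) (hcs : c ^ 2 + s ^ 2 = 1) (a b p q a' b' p' q' : ℝ)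
    (h : Red ![a, b, c * p + s * q, -s * p + c * q] ![a', b', c * p' + s * q', -s * p' + c * q']) :
    Red ![a, b, p, q] ![a', b', p', q'] := by
  refine red_mat !![1, 0, 0, 0; 0, 1, 0, 0; 0, 0, c, s; 0, 0, -s, c] (fun x y => ?_) ?_
  · simp [std_apply, Matrix.mulVec, dotProduct, Fin.sum_univ_succ]
    grind
  · convert h using 1 <;> ext i <;> fin_cases i <;>
      simp [Matrix.mulVec, dotProduct, Fin.sum_univ_succ]

/-- Boost in the plane of the first and third coordinates. -/
lemma red_boost (c s : ℝ) (hcs : c ^ 2 - s ^ 2 = 1) (a b p q a' b' p' q' : ℝ)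
    (h : Red ![c * a - s * p, b, -s * a + c * p, q] ![c * a' - s * p', b', -s * a' + c * p', q']) :
    Red ![a, b, p, q] ![a', b', p', q'] := by
  refine red_mat !![c, 0, -s, 0; 0, 1, 0, 0; -s, 0, c, 0; 0, 0, 0, 1] (fun x y => ?_) ?_
  · simp [std_apply, Matrix.mulVec, dotProduct, Fin.sum_univ_succ]
    grind
  · convert h using 1 <;> ext i <;> fin_cases i <;>
      simp [Matrix.mulVec, dotProduct, Fin.sum_univ_succ, sub_eq_add_neg]

lemma red_swap1 (a b p q a' b' p' q' : ℝ) (h : Red ![b, a, p, q] ![b', a', p', q']) :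
    Red ![a, b, p, q] ![a', b', p', q'] := by
  refine red_mat !![0, 1, 0, 0; 1, 0, 0, 0; 0, 0, 1, 0; 0, 0, 0, 1] (fun x y => ?_) ?_
  · simp [std_apply, Matrix.mulVec, dotProduct, Fin.sum_univ_succ]
    ring
  · convert h using 1 <;> ext i <;> fin_cases i <;>
      simp [Matrix.mulVec, dotProduct, Fin.sum_univ_succ]

lemma red_swap2 (a b p q a' b' p' q' : ℝ) (h : Red ![a, b, q, p] ![a', b', q', p']) :
    Red ![a, b, p, q] ![a', b', p', q'] := by
  refine red_mat !![1, 0, 0, 0; 0, 1, 0, 0; 0, 0, 0, 1; 0, 0, 1, 0] (fun x y => ?_) ?_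
  · simp [std_apply, Matrix.mulVec, dotProduct, Fin.sum_univ_succ]
    ring
  · convert h using 1 <;> ext i <;> fin_cases i <;>
      simp [Matrix.mulVec, dotProduct, Fin.sum_univ_succ]

/-- Sign change of the third coordinate. -/
lemma red_flip (a b p q a' b' p' q' : ℝ) (h : Red ![a, b, -p, q] ![a', b', -p', q']) :
    Red ![a, b, p, q] ![a', b', p', q'] := by
  refine red_mat !![1, 0, 0, 0; 0, 1, 0, 0; 0, 0, -1, 0; 0, 0, 0, 1] (fun x y => ?_) ?_
  · simp [std_apply, Matrix.mulVec, dotProduct, Fin.sum_univ_succ]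
  · convert h using 1 <;> ext i <;> fin_cases i <;>
      simp [Matrix.mulVec, dotProduct, Fin.sum_univ_succ]

lemma red_scale (c d e a b p q a' b' p' q' : ℝ) (hc : c ≠ 0) (hd : d ≠ 0)
    (h : Red ![c * a, c * b, c * p, c * q]
      ![d * a' + e * a, d * b' + e * b, d * p' + e * p, d * q' + e * q]) :
    Red ![a, b, p, q] ![a', b', p', q'] := by
  refine red_smul c d e hc hd ?_
  convert h using 1 <;> ext i <;> fin_cases i <;> simp

lemma exists_rot (a b : ℝ) : ∃ c s : ℝ, c ^ 2 + s ^ 2 = 1 ∧ -s * a + c * b = 0 := by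
  by_cases h : a ^ 2 + b ^ 2 = 0
  · have ha : a = 0 := by nlinarith [sq_nonneg a, sq_nonneg b]
    have hb : b = 0 := by nlinarith [sq_nonneg a, sq_nonneg b]
    exact ⟨1, 0, by simp, by simp [hb]⟩
  · have hp : 0 < a ^ 2 + b ^ 2 := lt_of_le_of_ne (by positivity) (Ne.symm h)
    have hs := Real.sq_sqrt hp.le
    have hr : Real.sqrt (a ^ 2 + b ^ 2) ≠ 0 := (Real.sqrt_pos.2 hp).ne'
    refine ⟨a / Real.sqrt (a ^ 2 + b ^ 2), b / Real.sqrt (a ^ 2 + b ^ 2), ?_, ?_⟩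
    · rw [div_pow, div_pow, hs]; field_simp
    · field_simp; ring

lemma exists_boost (a b : ℝ) (h : b ^ 2 < a ^ 2) :
    ∃ c s : ℝ, c ^ 2 - s ^ 2 = 1 ∧ -s * a + c * b = 0 := by
  have hp : 0 < a ^ 2 - b ^ 2 := by linarith
  have hs := Real.sq_sqrt hp.le
  have hr : Real.sqrt (a ^ 2 - b ^ 2) ≠ 0 := (Real.sqrt_pos.2 hp).ne'
  refine ⟨a / Real.sqrt (a ^ 2 - b ^ 2), b / Real.sqrt (a ^ 2 - b ^ 2), ?_, ?_⟩
  · rw [div_pow, div_pow, hs]; field_simp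
  · field_simp; ring

/-- Normalising the coordinates one and three of the second vector. -/
lemma red_plane {b q a' b' p' q' : ℝ} (hne : a' ≠ 0 ∨ p' ≠ 0)
    (h1 : ∀ r : ℝ, r ≠ 0 → Red ![0, b, 0, q] ![r, b', 0, q'])
    (h2 : ∀ r : ℝ, r ≠ 0 → Red ![0, b, 0, q] ![0, b', r, q'])
    (h3 : ∀ r : ℝ, r ≠ 0 → Red ![0, b, 0, q] ![r, b', r, q']) :
    Red ![0, b, 0, q] ![a', b', p', q'] := by
  rcases lt_trichotomy (p' ^ 2) (a' ^ 2) with h | h | h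
  · obtain ⟨c, s, hcs, h0⟩ := exists_boost a' p' h
    refine red_boost c s hcs _ _ _ _ _ _ _ _ ?_
    rw [h0]
    simp only [mul_zero, sub_zero, add_zero]
    refine h1 _ fun hr => ?_
    grind
  · rcases sq_eq_sq_iff_eq_or_eq_neg.1 h with h | h
    · subst h
      exact h3 _ (by tauto)
    · subst h
      apply red_flip
      simp only [neg_neg, neg_zero]
      exact h3 _ (by grind)
  · obtain ⟨c, s, hcs, h0⟩ := exists_boost p' a' h
    refine red_boost c s hcs _ _ _ _ _ _ _ _ ?_
    have h0' : c * a' - s * p' = 0 := by linarith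
    rw [h0']
    simp only [mul_zero, sub_zero, add_zero]
    refine h2 _ fun hr => ?_
    grind

/-- First vector `e₁`. -/
lemma red_pos (a b p q : ℝ) :
    Red ![1, 0, 0, 0] ![a, b, p, q] := by
  by_cases hne : b ≠ 0 ∨ p ≠ 0 ∨ q ≠ 0
  swap
  · push Not at hne
    refine red_degen _ (Submodule.mem_span_singleton_self _) ?_
    rw [Submodule.mem_span_singleton]
    exact ⟨a, by ext i; fin_cases i <;> simp [hne]⟩
  refine red_scale 1 1 (-a) _ _ _ _ _ _ _ _ one_ne_zero one_ne_zero ?_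
  obtain ⟨c, s, hcs, h0⟩ := exists_rot p q
  refine red_rot2 c s hcs _ _ _ _ _ _ _ _ ?_
  apply red_swap1
  simp only [mul_zero, mul_one, one_mul, add_zero, h0, add_neg_cancel]
  refine red_plane (by by_contra hh; grind) ?_ ?_ ?_
  all_goals
    intro r hr
    apply red_swap1
    refine red_scale 1 r⁻¹ 0 _ _ _ _ _ _ _ _ one_ne_zero (inv_ne_zero hr) ?_
    simp only [mul_zero, mul_one, zero_mul, add_zero, inv_mul_cancel₀ hr]
  · exact red_std 0
  · exact red_std 2
  · exact red_std 7

/-- First vector `e₃`. -/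
lemma red_neg (a b p q : ℝ) :
    Red ![0, 0, 1, 0] ![a, b, p, q] := by
  by_cases hne : a ≠ 0 ∨ b ≠ 0 ∨ q ≠ 0
  swap
  · push Not at hne
    refine red_degen _ (Submodule.mem_span_singleton_self _) ?_
    rw [Submodule.mem_span_singleton]
    exact ⟨p, by ext i; fin_cases i <;> simp [hne]⟩
  refine red_scale 1 1 (-p) _ _ _ _ _ _ _ _ one_ne_zero one_ne_zero ?_
  obtain ⟨c, s, hcs, h0⟩ := exists_rot a b
  refine red_rot1 c s hcs _ _ _ _ _ _ _ _ ?_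
  apply red_swap2
  simp only [mul_zero, mul_one, one_mul, add_zero, h0, add_neg_cancel]
  refine red_plane (by by_contra hh; grind) ?_ ?_ ?_
  all_goals
    intro r hr
    apply red_swap2
    refine red_scale 1 r⁻¹ 0 _ _ _ _ _ _ _ _ one_ne_zero (inv_ne_zero hr) ?_
    simp only [mul_zero, mul_one, zero_mul, add_zero, inv_mul_cancel₀ hr]
  · exact red_std 3
  · exact red_std 1
  · exact red_std 8

lemma red_siegel (b d : ℝ) : Red ![1, 0, 1, 0] ![0, b, -2, d] := by
  -- the isometry fixing `n = e₁ + e₃` and moving `e₁ - e₃` to `(0,b,-2,d) - lam n`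
  set l : ℝ := (b ^ 2 - 4 - d ^ 2) / 4 with hl
  refine red_scale 1 1 (-l) _ _ _ _ _ _ _ _ one_ne_zero one_ne_zero ?_
  refine red_mat !![1 - (b^2-d^2)/8, b/2, (b^2-d^2)/8, -d/2;
      -b/2, 1, b/2, 0; -(b^2-d^2)/8, b/2, 1 + (b^2-d^2)/8, -d/2; -d/2, 0, d/2, 1]
    (fun x y => ?_) ?_
  · simp [std_apply, Matrix.mulVec, dotProduct, Fin.sum_univ_succ]
    ring
  · convert red_std 4 using 1 <;> ext i <;> fin_cases i <;>
      simp [Matrix.mulVec, dotProduct, Fin.sum_univ_succ, sv, sw, hl] <;> ring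

/-- First vector `e₁ + e₃`. -/
lemma red_null (a b p q : ℝ) :
    Red ![1, 0, 1, 0] ![a, b, p, q] := by
  by_cases hpa : p = a
  · subst hpa
    refine red_scale 1 1 (-p) _ _ _ _ _ _ _ _ one_ne_zero one_ne_zero ?_
    simp only [mul_zero, mul_one, one_mul, add_zero, add_neg_cancel]
    by_cases hne : b ≠ 0 ∨ q ≠ 0
    swap
    · push Not at hne
      refine red_degen _ (Submodule.mem_span_singleton_self _) ?_
      rw [Submodule.mem_span_singleton]
      exact ⟨0, by ext i; fin_cases i <;> simp [hne]⟩
    apply red_swap1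
    apply red_swap2
    refine red_plane hne ?_ ?_ ?_
    all_goals
      intro r hr
      apply red_swap1
      apply red_swap2
      refine red_scale 1 r⁻¹ 0 _ _ _ _ _ _ _ _ one_ne_zero (inv_ne_zero hr) ?_
      simp only [mul_zero, mul_one, zero_mul, add_zero, inv_mul_cancel₀ hr]
    · exact red_std 5
    · exact red_std 6
    · exact red_std 9
  · have h : p - a ≠ 0 := sub_ne_zero.2 hpa
    refine red_scale 1 (-2 / (p - a)) (2 / (p - a) * a) _ _ _ _ _ _ _ _ one_ne_zero
      (div_ne_zero (by norm_num) h) ?_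
    convert red_siegel (-2 / (p - a) * b) (-2 / (p - a) * q) using 1 <;> ext i <;> fin_cases i <;>
      simp <;> field_simp <;> ring

lemma red_all (a b p q a' b' p' q' : ℝ) : Red ![a, b, p, q] ![a', b', p', q'] := by
  obtain ⟨c, s, hcs, h0⟩ := exists_rot a b
  refine red_rot1 c s hcs _ _ _ _ _ _ _ _ ?_
  rw [h0]
  obtain ⟨c', s', hcs', h0'⟩ := exists_rot p q
  refine red_rot2 c' s' hcs' _ _ _ _ _ _ _ _ ?_
  rw [h0']
  generalize c * a + s * b = x
  generalize c' * p + s' * q = y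
  generalize c * a' + s * b' = a1
  generalize -s * a' + c * b' = a2
  generalize c' * p' + s' * q' = a3
  generalize -s' * p' + c' * q' = a4
  have null : ∀ x a b p q : ℝ, Red ![x, 0, x, 0] ![a, b, p, q] := by
    intro x a b p q
    by_cases hx : x = 0
    · subst hx
      refine red_degen ![a, b, p, q] ?_ (Submodule.mem_span_singleton_self _)
      rw [Submodule.mem_span_singleton]
      exact ⟨0, by ext i; fin_cases i <;> simp⟩
    · refine red_scale x⁻¹ 1 0 _ _ _ _ _ _ _ _ (inv_ne_zero hx) one_ne_zero ?_
      simp only [mul_zero, inv_mul_cancel₀ hx]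
      exact red_null _ _ _ _
  rcases lt_trichotomy (y ^ 2) (x ^ 2) with h | h | h
  · obtain ⟨c, s, hcs, h0⟩ := exists_boost x y h
    refine red_boost c s hcs _ _ _ _ _ _ _ _ ?_
    rw [h0]
    have hr : c * x - s * y ≠ 0 := by
      intro hr
      grind
    refine red_scale (c * x - s * y)⁻¹ 1 0 _ _ _ _ _ _ _ _ (inv_ne_zero hr) one_ne_zero ?_
    simp only [mul_zero, inv_mul_cancel₀ hr]
    exact red_pos _ _ _ _
  · rcases sq_eq_sq_iff_eq_or_eq_neg.1 h with h | h
    · subst h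
      exact null _ _ _ _ _
    · subst h
      apply red_flip
      simp only [neg_neg]
      exact null _ _ _ _ _
  · obtain ⟨c, s, hcs, h0⟩ := exists_boost y x h
    refine red_boost c s hcs _ _ _ _ _ _ _ _ ?_
    have h0' : c * x - s * y = 0 := by linarith
    rw [h0']
    have hr : -s * x + c * y ≠ 0 := by
      intro hr
      grind
    refine red_scale (-s * x + c * y)⁻¹ 1 0 _ _ _ _ _ _ _ _ (inv_ne_zero hr) one_ne_zero ?_
    simp only [mul_zero, inv_mul_cancel₀ hr]
    exact red_neg _ _ _ _

lemma red_any (v w : Fin (2 + 2) → ℝ) : Red v w := by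
  have h := red_all (v 0) (v 1) (v 2) (v 3) (w 0) (w 1) (w 2) (w 3)
  convert h using 1 <;> ext i <;> fin_cases i <;> rfl

lemma std_indep (i : Fin 10) : LinearIndependent ℝ ![sv i, sw i] := by
  rw [LinearIndependent.pair_iff]
  intro s t h
  have h0 := congrFun h 0
  have h1 := congrFun h 1
  have h2 := congrFun h 2
  have h3 := congrFun h 3
  fin_cases i <;> simp [sv, sw] at h0 h1 h2 h3 <;> constructor <;> linarith

def stdFlag (i : Fin 10) : FlagPQ 2 2 :=
  ⟨(Submodule.span ℝ {sv i}, Submodule.span ℝ {sv i, sw i}),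
    Submodule.span_mono (by simp),
    finrank_span_singleton (by simpa using (std_indep i).ne_zero 0),
    by
      have := finrank_span_eq_card (std_indep i)
      have hr : Set.range ![sv i, sw i] = {sv i, sw i} := by
        simp [Matrix.range_cons, Matrix.range_empty, Set.pair_comm]
      rw [hr] at this
      simpa using this⟩

lemma exists_pair (F : FlagPQ 2 2) : ∃ v w : Fin (2 + 2) → ℝ,
    F.1.1 = Submodule.span ℝ {v} ∧ F.1.2 = Submodule.span ℝ {v, w} := by
  obtain ⟨⟨V, W⟩, hle, h1, h2⟩ := F
  simp only at hle h1 h2 ⊢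
  obtain ⟨v, hv, hspan⟩ := finrank_eq_one_iff'.1 h1
  have hV : V = Submodule.span ℝ {(v : Fin (2 + 2) → ℝ)} := by
    apply le_antisymm
    · intro x hx
      obtain ⟨c, hc⟩ := hspan ⟨x, hx⟩
      rw [Submodule.mem_span_singleton]
      exact ⟨c, congrArg Subtype.val hc⟩
    · rw [Submodule.span_singleton_le_iff_mem]
      exact v.2
  have hlt : V < W := lt_of_le_of_ne hle (by rintro rfl; omega)
  obtain ⟨w, hwW, hwV⟩ := SetLike.exists_of_lt hlt
  refine ⟨v, w, hV, ?_⟩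
  have hle2 : Submodule.span ℝ {(v : Fin (2 + 2) → ℝ), w} ≤ W := by
    rw [Submodule.span_le]
    rintro x (rfl | rfl)
    · exact hle v.2
    · exact hwW
  have hlt2 : V < Submodule.span ℝ {(v : Fin (2 + 2) → ℝ), w} := by
    refine lt_of_le_of_ne (hV.le.trans (Submodule.span_mono (by simp))) fun h => hwV ?_
    rw [h]
    exact Submodule.subset_span (by simp)
  have := Submodule.finrank_lt_finrank_of_lt hlt2
  exact (Submodule.eq_of_le_of_finrank_le hle2 (by omega)).symm

/-- Invariants of flags. -/
def flagInv (F : FlagPQ 2 2) : Fin 5 → Prop :=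
  ![∃ x ∈ F.1.1, 0 < stdForm 2 2 x x, ∃ x ∈ F.1.1, stdForm 2 2 x x < 0,
    ∃ x ∈ F.1.2, 0 < stdForm 2 2 x x, ∃ x ∈ F.1.2, stdForm 2 2 x x < 0,
    ∃ x ∈ F.1.2, x ≠ 0 ∧ ∀ y ∈ F.1.2, stdForm 2 2 x y = 0]

lemma flagInv_eq (F G : FlagPQ 2 2) (h : orbitRel 2 2 F G) : flagInv F = flagInv G := by
  obtain ⟨g, hg, h1, h2⟩ := h
  unfold flagInv
  rw [h1, h2]
  simp only [Submodule.mem_map, exists_exists_and_eq_and, forall_exists_index, and_imp,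
    forall_apply_eq_imp_iff₂, LinearEquiv.coe_coe, hg, ne_eq, LinearEquiv.map_eq_zero_iff]

/-- Table of invariants of the standard flags. -/
def tab : Fin 10 → Fin 5 → Bool :=
  ![![true, false, true, false, false], ![false, true, false, true, false],
    ![true, false, true, true, false], ![false, true, true, true, false],
    ![false, false, true, true, false], ![false, false, true, false, true],
    ![false, false, false, true, true], ![true, false, true, false, true],
    ![false, true, false, true, true], ![false, false, false, false, true]]

lemma tab_inj : Function.Injective tab := by decide

lemma inv0 (i : Fin 10) : flagInv (stdFlag i) 0 ↔ tab i 0 = true := by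
  simp only [flagInv, stdFlag, Matrix.cons_val, Submodule.mem_span_singleton,
    exists_exists_eq_and, std_apply]
  fin_cases i <;> simp [sv, tab]
  all_goals first | (refine ⟨1, ?_⟩; norm_num; done) | (intros; nlinarith)

lemma inv1 (i : Fin 10) : flagInv (stdFlag i) 1 ↔ tab i 1 = true := by
  simp only [flagInv, stdFlag, Matrix.cons_val, Submodule.mem_span_singleton,
    exists_exists_eq_and, std_apply]
  fin_cases i <;> simp [sv, tab]
  all_goals first | (refine ⟨1, ?_⟩; norm_num; done) | (intros; nlinarith)

lemma inv2 (i : Fin 10) : flagInv (stdFlag i) 2 ↔ tab i 2 = true := by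
  simp only [flagInv, stdFlag, Matrix.cons_val, Submodule.mem_span_pair, std_apply]
  have e : (∃ x, (∃ a b : ℝ, a • sv i + b • sw i = x) ∧
      0 < x 0 * x 0 + x 1 * x 1 - x 2 * x 2 - x 3 * x 3) ↔ ∃ a b : ℝ,
      0 < (a * sv i 0 + b * sw i 0) * (a * sv i 0 + b * sw i 0)
        + (a * sv i 1 + b * sw i 1) * (a * sv i 1 + b * sw i 1)
        - (a * sv i 2 + b * sw i 2) * (a * sv i 2 + b * sw i 2)
        - (a * sv i 3 + b * sw i 3) * (a * sv i 3 + b * sw i 3) := by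
    constructor
    · rintro ⟨x, ⟨a, b, rfl⟩, h⟩
      exact ⟨a, b, h⟩
    · rintro ⟨a, b, h⟩
      exact ⟨_, ⟨a, b, rfl⟩, h⟩
  rw [e]
  fin_cases i <;> simp [sv, sw, tab]
  all_goals first
    | (refine ⟨1, 0, ?_⟩; norm_num; done) | (refine ⟨0, 1, ?_⟩; norm_num; done) | (refine ⟨1, 1, ?_⟩; norm_num; done)
    | (refine ⟨1, ?_⟩; norm_num; done) | (intros; nlinarith)

lemma inv3 (i : Fin 10) : flagInv (stdFlag i) 3 ↔ tab i 3 = true := by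
  simp only [flagInv, stdFlag, Matrix.cons_val, Submodule.mem_span_pair, std_apply]
  have e : (∃ x, (∃ a b : ℝ, a • sv i + b • sw i = x) ∧
      x 0 * x 0 + x 1 * x 1 - x 2 * x 2 - x 3 * x 3 < 0) ↔ ∃ a b : ℝ,
      (a * sv i 0 + b * sw i 0) * (a * sv i 0 + b * sw i 0)
        + (a * sv i 1 + b * sw i 1) * (a * sv i 1 + b * sw i 1)
        - (a * sv i 2 + b * sw i 2) * (a * sv i 2 + b * sw i 2)
        - (a * sv i 3 + b * sw i 3) * (a * sv i 3 + b * sw i 3) < 0 := by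
    constructor
    · rintro ⟨x, ⟨a, b, rfl⟩, h⟩
      exact ⟨a, b, h⟩
    · rintro ⟨a, b, h⟩
      exact ⟨_, ⟨a, b, rfl⟩, h⟩
  rw [e]
  fin_cases i <;> simp [sv, sw, tab]
  all_goals first
    | (refine ⟨1, 0, ?_⟩; norm_num; done) | (refine ⟨0, 1, ?_⟩; norm_num; done) | (refine ⟨1, -1, ?_⟩; norm_num; done)
    | (refine ⟨1, ?_⟩; norm_num; done) | (intros; nlinarith)

lemma inv4 (i : Fin 10) : flagInv (stdFlag i) 4 ↔ tab i 4 = true := by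
  simp only [flagInv, stdFlag, Matrix.cons_val]
  have e : (∃ x ∈ Submodule.span ℝ {sv i, sw i}, x ≠ 0 ∧
      ∀ y ∈ Submodule.span ℝ {sv i, sw i}, stdForm 2 2 x y = 0) ↔
      ∃ a b : ℝ, (a ≠ 0 ∨ b ≠ 0) ∧
        a * stdForm 2 2 (sv i) (sv i) + b * stdForm 2 2 (sw i) (sv i) = 0 ∧
        a * stdForm 2 2 (sv i) (sw i) + b * stdForm 2 2 (sw i) (sw i) = 0 := by
    constructor
    · rintro ⟨x, hx, hx0, h⟩
      obtain ⟨a, b, rfl⟩ := Submodule.mem_span_pair.1 hx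
      refine ⟨a, b, ?_, ?_, ?_⟩
      · by_contra hh
        push Not at hh
        exact hx0 (by simp [hh.1, hh.2])
      · simpa using h (sv i) (Submodule.subset_span (by simp))
      · simpa using h (sw i) (Submodule.subset_span (by simp))
    · rintro ⟨a, b, hab, h1, h2⟩
      refine ⟨a • sv i + b • sw i, Submodule.mem_span_pair.2 ⟨a, b, rfl⟩, fun h0 => ?_, ?_⟩
      · have := LinearIndependent.pair_iff.1 (std_indep i) a b h0
        tauto
      · intro y hy
        obtain ⟨c, d, rfl⟩ := Submodule.mem_span_pair.1 hy
        simp only [map_add, map_smul, LinearMap.add_apply, LinearMap.smul_apply, smul_eq_mul]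
        linear_combination c * h1 + d * h2
  rw [e]
  simp only [std_apply]
  fin_cases i <;> simp [sv, sw, tab]
  all_goals first
    | (refine ⟨1, 0, ?_⟩; norm_num; done) | (refine ⟨0, 1, ?_⟩; norm_num; done) | (refine ⟨1, ?_⟩; norm_num; done)
    | grind

lemma flagInv_std (i : Fin 10) (k : Fin 5) : flagInv (stdFlag i) k ↔ tab i k = true := by
  fin_cases k
  · exact inv0 i
  · exact inv1 i
  · exact inv2 i
  · exact inv3 i
  · exact inv4 i

/-- The action of `O(2,2)` on the flag manifold `F_{1,2}` of `ℝ⁴` has exactly 10 orbits. -/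
theorem orbit_count_of_p_eq_q_eq_two :
    Nat.card (Quot (orbitRel 2 2)) = 10 := by
  have hbij : Function.Bijective (fun i : Fin 10 => Quot.mk (orbitRel 2 2) (stdFlag i)) := by
    constructor
    · intro i j hij
      have h := congrArg (Quot.lift flagInv flagInv_eq) hij
      apply tab_inj
      funext k
      have hk : flagInv (stdFlag i) k = flagInv (stdFlag j) k := congrFun h k
      rw [Bool.eq_iff_iff, ← flagInv_std, ← flagInv_std, hk]
    · intro x
      induction x using Quot.ind with
      | mk F =>
        obtain ⟨v, w, h1, h2⟩ := exists_pair F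
        obtain ⟨i, g, hg, ha, hb⟩ := red_any v w (by rw [← h2]; exact F.2.2.2)
        exact ⟨i, Quot.sound ⟨g, hg, by rw [h1]; exact ha, by rw [h2]; exact hb⟩⟩
  rw [← Nat.card_eq_of_bijective _ hbij, Nat.card_fin]
end
end
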